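/- There exist constants c > 0 and C ≥ 1 such that for every integer n ≥ 2 there is a 2-SAT formula Φ with at most C·n variables and at most C·n clauses, each clause containing exactly two literals, such that every extended formulation of SAT(Φ) has size at least 2^{c·n/log n}, i.e., xc(SAT(Φ)) ≥ 2^{c·n/log n}. -/

import Mathlib

open Finset

noncomputable section

/-- An extended formulation of size `k` (number of inequalities) for `P ⊆ ℝ^ι`. -/
def IsEF {ι : Type} [Fintype ι] (P : Set (ι → ℝ)) (k : ℕ) : Prop :=
  ∃ (e l : ℕ) (A : Matrix (Fin k) (Fin e) ℝ) (b : Fin k → ℝ)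
    (C : Matrix (Fin l) (Fin e) ℝ) (d : Fin l → ℝ)
    (π : (Fin e → ℝ) →ᵃ[ℝ] (ι → ℝ)),
    π '' {y | (∀ r, A.mulVec y r ≤ b r) ∧ (∀ r, C.mulVec y r = d r)} = P

/-- The extension complexity of `P`. -/
noncomputable def xc {ι : Type} [Fintype ι] (P : Set (ι → ℝ)) : ℕ :=
  sInf {k | IsEF P k}

/-- A 2-SAT formula over variables `V`: a list of clauses, each clause being a pair of
literals, where a literal is a variable together with a sign. -/
structure TwoSAT (V : Type) where
  clauses : List ((V × Bool) × (V × Bool))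

/-- A literal `l = (v, s)` is satisfied by the assignment `a` if `a v = s`. -/
def litSat {V : Type} (a : V → Bool) (l : V × Bool) : Prop := a l.1 = l.2

/-- An assignment satisfies the formula if every clause has a satisfied literal. -/
def TwoSAT.Sat {V : Type} (Φ : TwoSAT V) (a : V → Bool) : Prop :=
  ∀ cl ∈ Φ.clauses, litSat a cl.1 ∨ litSat a cl.2

/-- `SAT(Φ)`: the convex hull of all satisfying assignments, viewed as 0/1 vectors. -/
def SATpoly {V : Type} [Fintype V] (Φ : TwoSAT V) : Set (V → ℝ) :=
  convexHull ℝ {x | ∃ a : V → Bool, Φ.Sat a ∧ x = fun v => if a v then (1 : ℝ) else 0}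

/-!
An extended formulation of size `k` of the polytope of a formula, together with a family of
nonnegative affine functions on the polytope, yields a factorization of the slack matrix into
`k + 1` nonnegative rank-one matrices. The slack used here is the cost of a two-player game.

Two players hold labels in `ZMod 4` of the edges of five parallel butterfly networks on the same
`d * N` nodes, with `N ≤ 2 ^ d`, and the second player also holds node charges of total one. Adding
the two labels of an edge and applying `gadget` gives a chain modulo two, and a node is violated if
the boundary of the chain differs from its charge. By the handshake lemma some node is violated,
and the cost is the number of violated nodes minus one. The formula has variables for the edge
labels and for each local labelling of each node, so that the cost is affine on its polytope, and
it has `O (d * N)` variables and clauses because the networks have constant degree.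

For the lower bound choose five random ports `v i`, and in the `i`-th network the paths of
displacement `v (i + 1) - v i` from all positions. Each player adds `incr` to the labels along the
paths from a random set of positions. The two sets are disjoint except that the membership of
`v i` is pinned to `p i` and to `q i`, and thanks to `gadget_add_incr` the path from `v i` to
`v (i + 1)` is flipped exactly if `p i` and `q i` are both true. In this way the cost is
* at most four if both patterns are identically true,
* two if both patterns are `allBut i` and the ports are distinct,
* zero for the patterns `allBut i` and `allBut (i + 2)`.

By the last item, a rank-one term has nonzero means for both patterns equal to `allBut i` only for
an independent set of a five-cycle of indices `i`, so for at most two of them. By a level-one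
inequality a bounded function on the cube can hardly tell the pinned coordinates apart, so each of
these means is, up to a factor `1 - ε` and an exponentially small error, at most the mean for the
patterns which are identically true. Summing over the terms gives `(1 - ε) * 5 * 2 ≤ 2 * 4` up to
the errors, which forces `k` to be exponential in `N`. It remains to take `N` about `n / log n` and
`d` about `log n`.
-/

open scoped BigOperators

/-! ### Farkas' lemma and Yannakakis' theorem -/

section Farkas

variable {𝕜 W ι κ : Type*} [Field 𝕜] [AddCommGroup W] [Module 𝕜 W]

/-- The projection along `x₀` onto the hyperplane `f = 0`, for `f x₀ ≠ 0`. Composing with it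
eliminates the constraint `0 ≤ f` in the inductive proof of Farkas' lemma. -/
def projAlong (f : W →ₗ[𝕜] 𝕜) (x₀ : W) : W →ₗ[𝕜] W :=
  LinearMap.id - ((f x₀)⁻¹ • f).smulRight x₀

theorem apply_projAlong {f : W →ₗ[𝕜] 𝕜} {x₀ : W} (h : f x₀ ≠ 0) (x : W) :
    f (projAlong f x₀ x) = 0 := by
  simp [projAlong, mul_right_comm, inv_mul_cancel₀ h]

theorem eq_smul_of_comp_projAlong_eq_zero {f g : W →ₗ[𝕜] 𝕜} {x₀ : W}
    (h : g ∘ₗ projAlong f x₀ = 0) : g = (g x₀ / f x₀) • f := by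
  ext x
  have hx : g x - (f x₀)⁻¹ * f x * g x₀ = 0 := by
    simpa [projAlong] using LinearMap.congr_fun h x
  rw [LinearMap.smul_apply, smul_eq_mul]
  linear_combination hx

/-- The linear functional on `W × 𝕜` restricting to the affine functional `f` on `W × {1}`. -/
def homogenization (f : W →ᵃ[𝕜] 𝕜) : W × 𝕜 →ₗ[𝕜] 𝕜 :=
  f.linear ∘ₗ LinearMap.fst 𝕜 W 𝕜 + f 0 • LinearMap.snd 𝕜 W 𝕜

theorem homogenization_apply_one (f : W →ᵃ[𝕜] 𝕜) (x : W) : homogenization f (x, 1) = f x := by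
  simpa [homogenization] using (congrFun f.decomp x).symm

theorem homogenization_apply_of_ne_zero (f : W →ᵃ[𝕜] 𝕜) (x : W) {t : 𝕜} (ht : t ≠ 0) :
    homogenization f (x, t) = t * f (t⁻¹ • x) := by
  rw [← homogenization_apply_one, ← smul_eq_mul, ← map_smul, Prod.smul_mk, smul_inv_smul₀ ht,
    smul_eq_mul, mul_one]

theorem apply_add_smul_eq_homogenization (f : W →ᵃ[𝕜] 𝕜) (x₀ x : W) (t : 𝕜) :
    f (x₀ + t • x) = f x₀ + t * homogenization f (x, 0) := by
  have h : ((x₀ + t • x, 1) : W × 𝕜) = (x₀, 1) + t • (x, 0) := by simp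
  rw [← homogenization_apply_one, h, map_add, map_smul, homogenization_apply_one, smul_eq_mul]

variable [LinearOrder 𝕜] [IsStrictOrderedRing 𝕜]

theorem exists_nonneg_combination_of_forall_nonneg (s : Finset ι) (a : ι → W →ₗ[𝕜] 𝕜)
    (b : W →ₗ[𝕜] 𝕜) (h : ∀ x, (∀ i ∈ s, 0 ≤ a i x) → 0 ≤ b x) :
    ∃ c : ι → 𝕜, 0 ≤ c ∧ b = ∑ i ∈ s, c i • a i := by
  classical
  induction s using Finset.induction_on generalizing a b with
  | empty =>
    refine ⟨0, le_rfl, LinearMap.ext fun x => ?_⟩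
    have hx : 0 ≤ b x := h x (by simp)
    have hnegx : 0 ≤ b (-x) := h (-x) (by simp)
    rw [map_neg] at hnegx
    rw [sum_empty, LinearMap.zero_apply]
    linarith
  | insert j s hj ih =>
    suffices H : ∃ t : 𝕜, ∃ c : ι → 𝕜, 0 ≤ t ∧ 0 ≤ c ∧ b = t • a j + ∑ i ∈ s, c i • a i by
      obtain ⟨t, c, ht, hc, hb⟩ := H
      refine ⟨Function.update c j t, le_update_iff.2 ⟨ht, fun i _ => hc i⟩, ?_⟩
      rw [sum_insert hj, Function.update_self, hb]
      congr 1
      exact sum_congr rfl fun i hi => by rw [Function.update_of_ne (ne_of_mem_of_not_mem hi hj)]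
    by_cases hb : ∀ x, (∀ i ∈ s, 0 ≤ a i x) → 0 ≤ b x
    · obtain ⟨c, hc, hbc⟩ := ih a b hb
      exact ⟨0, c, le_rfl, hc, by rw [zero_smul, zero_add, hbc]⟩
    push Not at hb
    obtain ⟨x₀, hx₀, hbx₀⟩ := hb
    have hj₀ : a j x₀ < 0 := by
      by_contra! hcon
      exact (h x₀ (forall_mem_insert _ _ _ |>.2 ⟨hcon, hx₀⟩)).not_gt hbx₀
    obtain ⟨c, hc, hbc⟩ := ih (fun i => a i ∘ₗ projAlong (a j) x₀) (b ∘ₗ projAlong (a j) x₀)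
      fun x hx => h _ (forall_mem_insert _ _ _ |>.2 ⟨(apply_projAlong hj₀.ne x).ge, hx⟩)
    have hcomb : (b - ∑ i ∈ s, c i • a i) ∘ₗ projAlong (a j) x₀ = 0 := by
      ext x
      simpa [sub_eq_zero] using LinearMap.congr_fun hbc x
    have hle : (b - ∑ i ∈ s, c i • a i) x₀ ≤ 0 := by
      have hsum : 0 ≤ ∑ i ∈ s, c i * a i x₀ := sum_nonneg fun i hi => mul_nonneg (hc i) (hx₀ i hi)
      simp only [LinearMap.sub_apply, LinearMap.sum_apply, LinearMap.smul_apply, smul_eq_mul]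
      linarith
    exact ⟨_, c, div_nonneg_of_nonpos hle hj₀.le, hc,
      sub_eq_iff_eq_add.1 (eq_smul_of_comp_projAlong_eq_zero hcomb)⟩

theorem homogenization_nonneg_of_forall_nonneg {a : ι → W →ᵃ[𝕜] 𝕜} {b : W →ᵃ[𝕜] 𝕜} {x₀ : W}
    (hx₀ : ∀ i, 0 ≤ a i x₀) (h : ∀ x, (∀ i, 0 ≤ a i x) → 0 ≤ b x) {x : W} {t : 𝕜} (ht : 0 ≤ t)
    (hx : ∀ i, 0 ≤ homogenization (a i) (x, t)) : 0 ≤ homogenization b (x, t) := by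
  rcases ht.eq_or_lt with rfl | ht
  · by_contra! hneg
    -- `x` is a direction of recession along which `b` would decrease below zero.
    have hb := h (x₀ + ((b x₀ + 1) / -homogenization b (x, 0)) • x) fun i => by
      rw [apply_add_smul_eq_homogenization]
      have := h x₀ hx₀
      exact add_nonneg (hx₀ i) (mul_nonneg (div_nonneg (by linarith) (by linarith)) (hx i))
    rw [apply_add_smul_eq_homogenization, div_neg, neg_mul, div_mul_cancel₀ _ hneg.ne] at hb
    linarith
  · simp only [homogenization_apply_of_ne_zero _ _ ht.ne', mul_nonneg_iff_of_pos_left ht] at hx ⊢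
    exact h _ hx

theorem exists_affine_nonneg_combination [Fintype ι] (a : ι → W →ᵃ[𝕜] 𝕜) (b : W →ᵃ[𝕜] 𝕜)
    {x₀ : W} (hx₀ : ∀ i, 0 ≤ a i x₀) (h : ∀ x, (∀ i, 0 ≤ a i x) → 0 ≤ b x) :
    ∃ (c₀ : 𝕜) (c : ι → 𝕜), 0 ≤ c₀ ∧ 0 ≤ c ∧ ∀ x, b x = c₀ + ∑ i, c i * a i x := by
  obtain ⟨c, hc, hbc⟩ := exists_nonneg_combination_of_forall_nonneg univ
    (fun o : Option ι => o.elim (LinearMap.snd 𝕜 W 𝕜) fun i => homogenization (a i))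
    (homogenization b) fun ⟨x, t⟩ hx =>
      homogenization_nonneg_of_forall_nonneg hx₀ h (hx none (mem_univ _))
        fun i => hx (some i) (mem_univ _)
  refine ⟨c none, fun i => c (some i), hc none, fun i => hc (some i), fun x => ?_⟩
  rw [← homogenization_apply_one, hbc]
  simp [Fintype.sum_option, homogenization_apply_one]

theorem exists_affine_nonneg_combination_of_eq_zero [Fintype ι] [Finite κ]
    (a : ι → W →ᵃ[𝕜] 𝕜) (e : κ → W →ᵃ[𝕜] 𝕜) (b : W →ᵃ[𝕜] 𝕜) {x₀ : W}
    (hx₀ : (∀ i, 0 ≤ a i x₀) ∧ ∀ j, e j x₀ = 0)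
    (h : ∀ x, (∀ i, 0 ≤ a i x) → (∀ j, e j x = 0) → 0 ≤ b x) :
    ∃ (c₀ : 𝕜) (c : ι → 𝕜), 0 ≤ c₀ ∧ 0 ≤ c ∧
      ∀ x, (∀ j, e j x = 0) → b x = c₀ + ∑ i, c i * a i x := by
  have := Fintype.ofFinite κ
  obtain ⟨c₀, c, hc₀, hc, hb⟩ := exists_affine_nonneg_combination
    (Sum.elim a (Sum.elim e (-e))) b (x₀ := x₀) (by simp [hx₀]) fun x hx => by
      simp only [Sum.forall, Sum.elim_inl, Sum.elim_inr, Pi.neg_apply, AffineMap.coe_neg,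
        Left.nonneg_neg_iff] at hx
      exact h x hx.1 fun j => (hx.2.2 j).antisymm (hx.2.1 j)
  refine ⟨c₀, c ∘ Sum.inl, hc₀, fun i => hc _, fun x hx => ?_⟩
  simp [hb, hx, Fintype.sum_sum_type]

end Farkas

section ExtendedFormulation

variable {ι : Type} [Fintype ι]

/-- One direction of Yannakakis' theorem: a matrix of slacks has a nonnegative factorization whose
terms are indexed by the inequalities, together with one constant term. -/
theorem IsEF.exists_factorization {P : Set (ι → ℝ)} {k : ℕ} (hP : IsEF P k) {X Y : Type*}
    (p : X → ι → ℝ) (hp : ∀ x, p x ∈ P) (l : Y → (ι → ℝ) →ᵃ[ℝ] ℝ)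
    (hl : ∀ y, ∀ q ∈ P, 0 ≤ l y q) :
    ∃ (f : Option (Fin k) → X → ℝ) (g : Option (Fin k) → Y → ℝ),
      0 ≤ f ∧ 0 ≤ g ∧ ∀ x y, l y (p x) = ∑ r, f r x * g r y := by
  obtain ⟨e, m, A, b, C, d, π, rfl⟩ := hP
  rcases isEmpty_or_nonempty X with hX | ⟨⟨x₀⟩⟩
  · exact ⟨0, 0, le_rfl, le_rfl, fun x => hX.elim x⟩
  choose z hz hzp using hp
  let slack (r : Fin k) : (Fin e → ℝ) →ᵃ[ℝ] ℝ :=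
    AffineMap.const ℝ _ (b r) - (LinearMap.proj r ∘ₗ A.mulVecLin).toAffineMap
  let residual (r : Fin m) : (Fin e → ℝ) →ᵃ[ℝ] ℝ :=
    AffineMap.const ℝ _ (d r) - (LinearMap.proj r ∘ₗ C.mulVecLin).toAffineMap
  have hslack (y : Fin e → ℝ) (r : Fin k) : 0 ≤ slack r y ↔ A.mulVec y r ≤ b r := sub_nonneg
  have hresidual (y : Fin e → ℝ) (r : Fin m) : residual r y = 0 ↔ C.mulVec y r = d r :=
    sub_eq_zero.trans eq_comm
  have hcomb (y : Y) := exists_affine_nonneg_combination_of_eq_zero slack residual ((l y).comp π)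
    (x₀ := z x₀) ⟨fun r => (hslack _ r).2 ((hz x₀).1 r), fun r => (hresidual _ r).2 ((hz x₀).2 r)⟩
    fun w hw hw' => hl y _ ⟨w, ⟨fun r => (hslack w r).1 (hw r), fun r => (hresidual w r).1 (hw' r)⟩,
      rfl⟩
  choose c₀ c hc₀ hc hlc using hcomb
  refine ⟨fun o x => o.elim 1 fun r => slack r (z x), fun o y => o.elim (c₀ y) (c y),
    fun o x => ?_, fun o y => ?_, fun x y => ?_⟩
  · cases o with
    | none => exact zero_le_one
    | some r => exact (hslack _ r).2 ((hz x).1 r)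
  · cases o with
    | none => exact hc₀ y
    | some r => exact hc y r
  · have := hlc y (z x) fun r => (hresidual _ r).2 ((hz x).2 r)
    rw [AffineMap.comp_apply, hzp] at this
    simpa [Fintype.sum_option, mul_comm] using this

theorem exists_isEF_convexHull {s : Set (ι → ℝ)} (hs : s.Finite) :
    ∃ k, IsEF (convexHull ℝ s) k := by
  obtain ⟨k, p, -, rfl⟩ := hs.fin_param
  have hp : Set.range p =
      Fintype.linearCombination ℝ p '' Set.range fun i => Pi.single i (1 : ℝ) := by
    rw [← Set.range_comp]
    exact congrArg Set.range (funext fun i => by simp [Fintype.linearCombination_apply_single])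
  have hsimplex : {y : Fin k → ℝ |
      (∀ r, (-1 : Matrix (Fin k) (Fin k) ℝ).mulVec y r ≤ (0 : Fin k → ℝ) r) ∧
        ∀ r : Fin 1, Matrix.mulVec (fun _ _ => 1) y r = (1 : Fin 1 → ℝ) r} =
      convexHull ℝ (Set.range fun i => Pi.single i (1 : ℝ)) := by
    rw [convexHull_rangle_single_eq_stdSimplex]
    ext y
    simp +contextual [stdSimplex, Matrix.mulVec, dotProduct, Matrix.one_apply]
  refine ⟨k, k, 1, -1, 0, fun _ _ => 1, 1, (Fintype.linearCombination ℝ p).toAffineMap, ?_⟩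
  rw [hsimplex, hp]
  exact (Fintype.linearCombination ℝ p).image_convexHull _

theorem IsEF.image {κ : Type} [Fintype κ] {P : Set (ι → ℝ)} {k : ℕ} (hP : IsEF P k)
    (φ : (ι → ℝ) →ᵃ[ℝ] (κ → ℝ)) : IsEF (φ '' P) k := by
  obtain ⟨e, m, A, b, C, d, π, rfl⟩ := hP
  exact ⟨e, m, A, b, C, d, φ.comp π, by rw [AffineMap.coe_comp, Set.image_comp]⟩

theorem isEF_xc_SATpoly (Φ : TwoSAT ι) : IsEF (SATpoly Φ) (xc (SATpoly Φ)) := by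
  refine Nat.sInf_mem (exists_isEF_convexHull (Set.Finite.subset
    (Set.finite_range fun (a : ι → Bool) v => if a v then (1 : ℝ) else 0) ?_))
  rintro _ ⟨a, -, rfl⟩
  exact ⟨a, rfl⟩

/-- Renaming of the variables of a formula. -/
def TwoSAT.map {V W : Type} (e : V → W) (Φ : TwoSAT V) : TwoSAT W where
  clauses := Φ.clauses.map (Prod.map (Prod.map e id) (Prod.map e id))

theorem TwoSAT.sat_map {V W : Type} {e : V → W} {Φ : TwoSAT V} {a : W → Bool} :
    (Φ.map e).Sat a ↔ Φ.Sat (a ∘ e) := by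
  simp only [TwoSAT.Sat, TwoSAT.map, List.forall_mem_map]
  rfl

theorem SATpoly_eq_image_map {V W : Type} [Fintype V] [Fintype W] (e : V ≃ W) (Φ : TwoSAT V) :
    SATpoly Φ = LinearMap.funLeft ℝ ℝ e '' SATpoly (Φ.map e) := by
  rw [SATpoly, SATpoly, LinearMap.image_convexHull]
  congr 1
  ext x
  constructor
  · rintro ⟨a, ha, rfl⟩
    refine ⟨_, ⟨a ∘ e.symm, TwoSAT.sat_map.2 (by simpa [Function.comp_assoc] using ha), rfl⟩, ?_⟩
    ext v
    simp [LinearMap.funLeft]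
  · rintro ⟨_, ⟨a, ha, rfl⟩, rfl⟩
    exact ⟨a ∘ e, TwoSAT.sat_map.1 ha, rfl⟩

theorem isEF_SATpoly_xc_map {V W : Type} [Fintype V] [Fintype W] (e : V ≃ W) (Φ : TwoSAT V) :
    IsEF (SATpoly Φ) (xc (SATpoly (Φ.map e))) := by
  rw [SATpoly_eq_image_map e]
  exact (isEF_xc_SATpoly (Φ.map e)).image (LinearMap.funLeft ℝ ℝ e).toAffineMap

end ExtendedFormulation

/-! ### Formulas for local labellings -/

section LabelFormula

theorem exists_mul_eq_mul_mul_of_mul_le {X Y : Type*} [Finite X] {f : X → ℝ} {g : Y → ℝ} {L : ℝ}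
    (hL : 0 < L) (hf : 0 ≤ f) (hg : 0 ≤ g) (hfg : ∀ x y, f x * g y ≤ L) :
    ∃ f' ∈ Set.Icc (0 : X → ℝ) 1, ∃ g' ∈ Set.Icc (0 : Y → ℝ) 1,
      ∀ x y, f x * g y = L * (f' x * g' y) := by
  rcases isEmpty_or_nonempty X with hX | hX
  · exact ⟨0, ⟨le_rfl, zero_le_one⟩, 0, ⟨le_rfl, zero_le_one⟩, fun x => hX.elim x⟩
  obtain ⟨m, hm⟩ := Finite.exists_max f
  rcases (show 0 ≤ f m from hf m).eq_or_lt with h0 | h0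
  · have hz (x : X) : f x = 0 := ((hm x).trans h0.ge).antisymm (hf x)
    exact ⟨0, ⟨le_rfl, zero_le_one⟩, 0, ⟨le_rfl, zero_le_one⟩, by simp [hz]⟩
  · refine ⟨fun x => f x / f m,
      ⟨fun x => div_nonneg (hf x) h0.le, fun x => (div_le_one h0).2 (hm x)⟩,
      fun y => f m * g y / L, ⟨fun y => div_nonneg (mul_nonneg h0.le (hg y)) hL.le,
        fun y => (div_le_one hL).2 (hfg m y)⟩, fun x y => ?_⟩
    field_simp

/-- The variables of `labelFormula`: `B`-indexed bits of the label of each edge, and one variable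
for each labelling of the slots of each node. -/
abbrev LabelVar (V E S A B : Type) : Type := (E × B) ⊕ (V × (S → A))

variable {V E S A B : Type} {inc : V → S → E} {enc : A ≃ (B → Bool)}

section

variable [Fintype V] [Fintype S] [DecidableEq S] [Fintype A] [Fintype B]

variable (inc enc) in
/-- The 2-SAT formula whose satisfying assignments describe labellings of edges by letters of `A`,
where `inc v s` is the edge in slot `s` of the node `v` and `enc` encodes letters by bits: a
local labelling `α` can be selected at the node `v` only if every bit of every edge of `v` agrees
with `α`. -/
def labelFormula : TwoSAT (LabelVar V E S A B) where
  clauses := (univ : Finset ((V × (S → A)) × (S × B))).toList.map fun ((v, α), (s, b)) =>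
    ((Sum.inr (v, α), false), (Sum.inl (inc v s, b), enc (α s) b))

variable (inc enc) in
theorem length_clauses_labelFormula : (labelFormula inc enc).clauses.length =
    Fintype.card V * (Fintype.card A ^ Fintype.card S * (Fintype.card S * Fintype.card B)) := by
  simp [labelFormula, mul_assoc]

variable (inc enc) in
theorem fst_ne_snd_of_mem_clauses_map {W : Type} (e : LabelVar V E S A B ≃ W) :
    ∀ cl ∈ ((labelFormula inc enc).map e).clauses, cl.1 ≠ cl.2 := by
  simp only [labelFormula, TwoSAT.map, List.forall_mem_map]
  simp [Prod.ext_iff]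

theorem labelFormula_sat_iff {a : LabelVar V E S A B → Bool} : (labelFormula inc enc).Sat a ↔
    ∀ v α, a (Sum.inr (v, α)) = true → ∀ s b, a (Sum.inl (inc v s, b)) = enc (α s) b := by
  simp only [TwoSAT.Sat, labelFormula, List.forall_mem_map, mem_toList, mem_univ, true_imp_iff]
  simp only [Prod.forall, litSat, ← Bool.not_eq_true, imp_iff_not_or, forall_or_left]

variable (inc enc) in
open Classical in
/-- The assignment of `labelFormula` describing the labelling `x`. -/
def labelAssignment (x : E → A) : LabelVar V E S A B → Bool
  | Sum.inl (e, b) => enc (x e) b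
  | Sum.inr (v, α) => decide (x ∘ inc v = α)

theorem sat_labelAssignment (x : E → A) :
    (labelFormula inc enc).Sat (labelAssignment inc enc x) := by
  refine labelFormula_sat_iff.2 fun v α hα s b => ?_
  obtain rfl : x ∘ inc v = α := by simpa [labelAssignment] using hα
  rfl

end

section

variable [Fintype V]

variable (inc) in
open Classical in
/-- The number of nodes, minus one, at which the labelling `x` fails the local test `P`. -/
def excess (P : V → (S → A) → Prop) (x : E → A) : ℝ :=
  #{v | ¬ P v (x ∘ inc v)} - 1

open Classical in
theorem excess_eq_sub_sum (P : V → (S → A) → Prop) (x : E → A) :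
    excess inc P x = Fintype.card V - 1 - ∑ v, if P v (x ∘ inc v) then 1 else 0 := by
  have h := card_filter_add_card_filter_not (s := univ) fun v => P v (x ∘ inc v)
  rw [sum_boole, excess, ← card_univ, ← h]
  push_cast
  ring

theorem excess_le_card (P : V → (S → A) → Prop) (x : E → A) :
    excess inc P x ≤ Fintype.card V := by
  classical
  have h : (#{v | ¬ P v (x ∘ inc v)} : ℝ) ≤ Fintype.card V := mod_cast card_le_univ _
  rw [excess]
  linarith

end

variable [Fintype V] [Fintype S] [DecidableEq S] [Fintype A]

open Classical in
/-- The affine form on assignments of `labelFormula` which extends `excess`. -/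
def excessForm (P : V → (S → A) → Prop) : (LabelVar V E S A B → ℝ) →ᵃ[ℝ] ℝ :=
  AffineMap.const ℝ _ (Fintype.card V - 1 : ℝ) -
    (∑ v, ∑ α with P v α, LinearMap.proj (Sum.inr (v, α)) :
      (LabelVar V E S A B → ℝ) →ₗ[ℝ] ℝ).toAffineMap

open Classical in
theorem excessForm_apply (P : V → (S → A) → Prop) (p : LabelVar V E S A B → ℝ) :
    excessForm P p = Fintype.card V - 1 - ∑ v, ∑ α with P v α, p (Sum.inr (v, α)) := by
  simp [excessForm]

theorem excessForm_labelAssignment (P : V → (S → A) → Prop) (x : E → A) :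
    excessForm P (fun i => if labelAssignment inc enc x i then 1 else 0) = excess inc P x := by
  classical
  rw [excessForm_apply, excess_eq_sub_sum]
  simp [labelAssignment]

variable [Fintype B]

theorem exists_excess_le_excessForm (P : V → (S → A) → Prop) {a : LabelVar V E S A B → Bool}
    (ha : (labelFormula inc enc).Sat a) :
    ∃ x : E → A, excess inc P x ≤ excessForm P fun i => if a i then 1 else 0 := by
  classical
  rw [labelFormula_sat_iff] at ha
  let x (e : E) : A := enc.symm fun b => a (Sum.inl (e, b))
  have hx (v : V) (α : S → A) (h : a (Sum.inr (v, α)) = true) : α = x ∘ inc v :=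
    funext fun s => (enc.symm_apply_eq.2 (funext (ha v α h s))).symm
  refine ⟨x, ?_⟩
  rw [excessForm_apply, excess_eq_sub_sum]
  refine sub_le_sub_left (sum_le_sum fun v _ => ?_) _
  calc ∑ α with P v α, (if a (Sum.inr (v, α)) then (1 : ℝ) else 0)
    _ ≤ ∑ α with P v α, if α = x ∘ inc v then 1 else 0 := by
        gcongr with α
        split_ifs with h h' <;> first | exact absurd (hx v α h) h' | norm_num
    _ = if P v (x ∘ inc v) then 1 else 0 := by simp

theorem excessForm_nonneg {P : V → (S → A) → Prop} (hP : ∀ x : E → A, 0 ≤ excess inc P x)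
    {p : LabelVar V E S A B → ℝ} [Fintype E] (hp : p ∈ SATpoly (labelFormula inc enc)) :
    0 ≤ excessForm P p := by
  suffices h : SATpoly (labelFormula inc enc) ⊆ excessForm P ⁻¹' Set.Ici 0 from h hp
  refine convexHull_min ?_ ((convex_Ici 0).affine_preimage _)
  rintro _ ⟨a, ha, rfl⟩
  obtain ⟨x, hx⟩ := exists_excess_le_excessForm P ha
  exact (hP x).trans hx

theorem IsEF.exists_excess_factorization [Fintype E] [Nonempty V] {k : ℕ}
    (h : IsEF (SATpoly (labelFormula inc enc)) k) {Y : Type*} (P : Y → V → (S → A) → Prop)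
    (hP : ∀ y (x : E → A), 0 ≤ excess inc (P y) x) :
    ∃ f ∈ Set.Icc (0 : Option (Fin k) → (E → A) → ℝ) 1,
      ∃ g ∈ Set.Icc (0 : Option (Fin k) → Y → ℝ) 1,
        ∀ x y, excess inc (P y) x = Fintype.card V * ∑ r, f r x * g r y := by
  classical
  obtain ⟨f, g, hf, hg, hfg⟩ := h.exists_factorization
    (fun (x : E → A) i => if labelAssignment inc enc x i then 1 else 0)
    (fun x => subset_convexHull ℝ _ ⟨_, sat_labelAssignment x, rfl⟩)
    (fun y => excessForm (P y)) fun y p hp => excessForm_nonneg (hP y) hp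
  simp only [excessForm_labelAssignment] at hfg
  have hle (r : Option (Fin k)) (x : E → A) (y : Y) : f r x * g r y ≤ Fintype.card V :=
    calc f r x * g r y
      _ ≤ ∑ r, f r x * g r y :=
        single_le_sum (f := fun r => f r x * g r y) (fun r _ => mul_nonneg (hf r x) (hg r y))
          (mem_univ r)
      _ ≤ Fintype.card V := hfg x y ▸ excess_le_card _ _
  choose f' hf' g' hg' hfg' using fun r =>
    exists_mul_eq_mul_mul_of_mul_le (mod_cast Fintype.card_pos) (hf r) (hg r) (hle r)
  refine ⟨f', ⟨fun r => (hf' r).1, fun r => (hf' r).2⟩, g', ⟨fun r => (hg' r).1,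
    fun r => (hg' r).2⟩, fun x y => ?_⟩
  rw [hfg, mul_sum]
  exact sum_congr rfl fun r _ => hfg' r x y

end LabelFormula

/-! ### Pinning a coordinate of a random subcube -/

section Cube

variable {ι : Type*}

theorem expect_bool (φ : Bool → ℝ) : 𝔼 c, φ c = (φ true + φ false) / 2 := by
  rw [Fintype.expect_eq_sum_div_card, Fintype.sum_bool, Fintype.card_bool, Nat.cast_ofNat]

variable [Fintype ι] [DecidableEq ι]

theorem expect_expect_update {κ M : Type*} [Fintype κ] [Nonempty κ] [AddCommMonoid M]
    [Module ℚ≥0 M] (i : ι) (φ : (ι → κ) → M) :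
    𝔼 a, 𝔼 c, φ (Function.update a i c) = 𝔼 a, φ a := by
  let swap (x : (ι → κ) × κ) : (ι → κ) × κ := (Function.update x.1 i x.2, x.1 i)
  have hswap : Function.Involutive swap := fun x => by simp [swap]
  calc 𝔼 a, 𝔼 c, φ (Function.update a i c)
    _ = 𝔼 x : (ι → κ) × κ, φ (Function.update x.1 i x.2) := by
        rw [← univ_product_univ, expect_product]
    _ = 𝔼 x : (ι → κ) × κ, φ x.1 := Fintype.expect_equiv hswap.toPerm _ _ fun _ => rfl
    _ = 𝔼 a, φ a := by rw [← univ_product_univ, expect_product]; simp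

theorem expect_compl (φ : (ι → Bool) → ℝ) : 𝔼 σ, φ σᶜ = 𝔼 σ, φ σ :=
  Fintype.expect_equiv compl_involutive.toPerm _ _ fun _ => rfl

theorem expect_ite_two_mul (j : ι) (φ : (ι → Bool) → ℝ)
    (h : ∀ σ c, φ (Function.update σ j c) = φ σ) :
    𝔼 σ, (if σ j then 2 * φ σ else 0) = 𝔼 σ, φ σ := by
  rw [← expect_expect_update j]
  simp only [expect_bool, Function.update_self, h]
  simp

/-! #### The level-one inequality -/

/-- The mean of `f` over the points of the cube with value `q` in the coordinate `j`. -/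
def sliceMean (f : (ι → Bool) → ℝ) (j : ι) (q : Bool) : ℝ := 𝔼 a, f (Function.update a j q)

theorem sliceMean_false_add_true (f : (ι → Bool) → ℝ) (j : ι) :
    sliceMean f j false + sliceMean f j true = 2 * 𝔼 a, f a := by
  rw [← expect_expect_update j f]
  simp only [expect_bool, ← expect_div, expect_add_distrib, sliceMean]
  ring

/-- The sign character of the coordinate `j`. -/
def boolSign (a : ι → Bool) (j : ι) : ℝ := if a j then -1 else 1

theorem two_mul_expect_mul_boolSign (f : (ι → Bool) → ℝ) (j : ι) :
    2 * 𝔼 a, f a * boolSign a j = sliceMean f j false - sliceMean f j true := by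
  rw [← expect_expect_update j]
  simp only [expect_bool, ← expect_div, expect_add_distrib, boolSign, Function.update_self,
    sliceMean, if_true, Bool.false_eq_true, if_false, mul_neg, mul_one, expect_neg_distrib]
  ring

theorem expect_exp_sum_mul_boolSign_le (c : ι → ℝ) :
    𝔼 a, Real.exp (∑ j, c j * boolSign a j) ≤ Real.exp (∑ j, c j ^ 2 / 2) :=
  calc 𝔼 a, Real.exp (∑ j, c j * boolSign a j)
    _ = ∏ j, Real.cosh (c j) := by
        simp only [Real.exp_sum, boolSign]
        rw [Fintype.expect_eq_sum_div_card,
          ← Fintype.prod_sum fun j (b : Bool) => Real.exp (c j * if b then -1 else 1)]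
        simp [Real.cosh_eq, prod_div_distrib, add_comm]
    _ ≤ ∏ j, Real.exp (c j ^ 2 / 2) :=
        prod_le_prod (fun j _ => (Real.cosh_pos _).le) fun j _ => Real.cosh_le_exp_half_sq _
    _ = Real.exp (∑ j, c j ^ 2 / 2) := (Real.exp_sum _ _).symm

theorem expect_mul_sum_mul_boolSign_le {f : (ι → Bool) → ℝ} (hf : f ∈ Set.Icc 0 1) (c : ι → ℝ)
    (u : ℝ) : 𝔼 a, f a * ∑ j, c j * boolSign a j ≤
      u * 𝔼 a, f a + Real.exp (∑ j, c j ^ 2 / 2 - u) := by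
  -- `L ≤ u + exp (L - u)`, and only the exponential is averaged over the whole cube.
  have hpoint (a : ι → Bool) (L : ℝ) : f a * L ≤ u * f a + Real.exp L * Real.exp (-u) := by
    have hL : L - u ≤ Real.exp (L - u) := by linarith [Real.add_one_le_exp (L - u)]
    have hfL : f a * (L - u) ≤ Real.exp (L - u) :=
      (mul_le_mul_of_nonneg_left hL (hf.1 a)).trans
        (mul_le_of_le_one_left (Real.exp_pos _).le (hf.2 a))
    rw [← Real.exp_add, ← sub_eq_add_neg]
    linarith
  calc 𝔼 a, f a * ∑ j, c j * boolSign a j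
    _ ≤ 𝔼 a, (u * f a + Real.exp (∑ j, c j * boolSign a j) * Real.exp (-u)) :=
        expect_le_expect fun a _ => hpoint a _
    _ = u * 𝔼 a, f a + (𝔼 a, Real.exp (∑ j, c j * boolSign a j)) * Real.exp (-u) := by
        rw [expect_add_distrib, ← mul_expect, ← expect_mul]
    _ ≤ u * 𝔼 a, f a + Real.exp (∑ j, c j ^ 2 / 2) * Real.exp (-u) := by
        gcongr
        exact expect_exp_sum_mul_boolSign_le c
    _ = u * 𝔼 a, f a + Real.exp (∑ j, c j ^ 2 / 2 - u) := by
        rw [← Real.exp_add, sub_eq_add_neg]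

theorem sum_abs_sliceMean_sub_le {f : (ι → Bool) → ℝ} (hf : f ∈ Set.Icc 0 1) {t : ℝ}
    (ht : 0 < t) : ∑ j, |sliceMean f j false - sliceMean f j true| ≤
      2 * t * Fintype.card ι * 𝔼 a, f a + 2 / t * Real.exp (-(t ^ 2 / 2 * Fintype.card ι)) := by
  let c (j : ι) : ℝ := if 0 ≤ sliceMean f j false - sliceMean f j true then t else -t
  have hc (j : ι) : c j ^ 2 = t ^ 2 := by simp only [c]; split_ifs <;> ring
  have habs (j : ι) : t * |sliceMean f j false - sliceMean f j true| =
      2 * 𝔼 a, f a * (c j * boolSign a j) := by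
    simp only [mul_left_comm _ (c j), ← mul_expect, two_mul_expect_mul_boolSign]
    simp only [c]
    split_ifs with h
    · rw [abs_of_nonneg h]
    · rw [abs_of_neg (not_le.1 h), mul_neg, neg_mul]
  have hsum : t * ∑ j, |sliceMean f j false - sliceMean f j true| ≤
      2 * (t ^ 2 * Fintype.card ι * 𝔼 a, f a + Real.exp (-(t ^ 2 / 2 * Fintype.card ι))) :=
    calc t * ∑ j, |sliceMean f j false - sliceMean f j true|
      _ = 2 * 𝔼 a, f a * ∑ j, c j * boolSign a j := by
          simp only [mul_sum, habs, expect_sum_comm]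
      _ ≤ 2 * (t ^ 2 * Fintype.card ι * 𝔼 a, f a +
            Real.exp (∑ j, c j ^ 2 / 2 - t ^ 2 * Fintype.card ι)) := by
          gcongr
          exact expect_mul_sum_mul_boolSign_le hf c _
      _ = _ := by
          simp only [hc, sum_const, card_univ, nsmul_eq_mul]
          ring_nf
  rw [← mul_le_mul_iff_right₀ ht]
  refine hsum.trans_eq ?_
  field_simp

/-! #### Subcubes -/

/-- The mean of `f` over the points supported in `σ`. -/
def subcubeMean (f : (ι → Bool) → ℝ) (σ : ι → Bool) : ℝ := 𝔼 a : ι → Bool, f (a ⊓ σ)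

/-- The mean of `f` over the points supported in `σ` away from `j`, with value `q` at `j`. -/
def pinnedMean (f : (ι → Bool) → ℝ) (σ : ι → Bool) (j : ι) (q : Bool) : ℝ :=
  𝔼 a : ι → Bool, f (Function.update (a ⊓ σ) j q)

theorem pinnedMean_update (f : (ι → Bool) → ℝ) (σ : ι → Bool) (j : ι) (q c : Bool) :
    pinnedMean f (Function.update σ j c) j q = pinnedMean f σ j q := by
  refine expect_congr rfl fun a _ => congrArg f (funext fun u => ?_)
  by_cases h : u = j <;> simp [h]

theorem pinnedMean_eq_sliceMean {σ : ι → Bool} {j : ι} (hj : σ j = true)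
    (f : (ι → Bool) → ℝ) (q : Bool) : pinnedMean f σ j q = sliceMean (fun a => f (a ⊓ σ)) j q := by
  refine expect_congr rfl fun a _ => congrArg f (funext fun u => ?_)
  by_cases h : u = j
  · subst h; simp [hj]
  · simp [h]

theorem pinnedMean_false {σ : ι → Bool} {j : ι} (hj : σ j = false) (f : (ι → Bool) → ℝ) :
    pinnedMean f σ j false = subcubeMean f σ := by
  refine expect_congr rfl fun a _ => congrArg f (funext fun u => ?_)
  by_cases h : u = j
  · subst h; simp [hj]
  · simp [h]

theorem sum_abs_pinnedMean_sub_le {f : (ι → Bool) → ℝ} (hf : f ∈ Set.Icc 0 1) (σ : ι → Bool)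
    {t : ℝ} (ht : 0 < t) :
    ∑ j with σ j, |pinnedMean f σ j false - pinnedMean f σ j true| ≤
      2 * t * Fintype.card ι * subcubeMean f σ +
        2 / t * Real.exp (-(t ^ 2 / 2 * Fintype.card ι)) := by
  refine le_trans ?_ (sum_abs_sliceMean_sub_le (f := fun a => f (a ⊓ σ))
    ⟨fun a => hf.1 (a ⊓ σ), fun a => hf.2 (a ⊓ σ)⟩ ht)
  refine (sum_congr rfl fun j hj => ?_).trans_le
    (sum_le_sum_of_subset_of_nonneg (subset_univ _) fun j _ _ => abs_nonneg _)
  simp only [pinnedMean_eq_sliceMean (mem_filter.1 hj).2]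

/-! #### Pinning to `true` instead of `false` -/

/-- The amount, beyond a fraction `ε / 2` of `m₀`, by which `m₁` falls below `m₀`. -/
def excessDrop (ε m₀ m₁ : ℝ) : ℝ := (m₀ - m₁)⁺ - ε / 2 * m₀

theorem two_mul_excessDrop_le {ε m₀ m₁ m : ℝ} (hε : 0 ≤ ε) (hε₁ : ε ≤ 1) (hm : m₀ + m₁ = 2 * m) :
    2 * excessDrop ε m₀ m₁ ≤ 2 * |m₀ - m₁| - ε * m := by
  have hpos : 2 * (m₀ - m₁)⁺ = |m₀ - m₁| + (m₀ - m₁) := by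
    linarith [posPart_add_negPart (m₀ - m₁), posPart_sub_negPart (m₀ - m₁)]
  have habs : (1 - ε / 2) * (m₀ - m₁) ≤ |m₀ - m₁| :=
    calc (1 - ε / 2) * (m₀ - m₁)
      _ ≤ (1 - ε / 2) * |m₀ - m₁| :=
        mul_le_mul_of_nonneg_left (le_abs_self _) (by linarith)
      _ ≤ |m₀ - m₁| := mul_le_of_le_one_left (abs_nonneg _) (by linarith)
  rw [excessDrop]
  linear_combination hpos + habs - ε / 2 * hm

/-- The part of the decrease from `a₀ * b₀` to `a₁ * b₁`, beyond a fraction `ε` of `a₀ * b₀`, which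
is due to the factors. -/
def pinLoss (ε a₀ a₁ b₀ b₁ : ℝ) : ℝ := excessDrop ε a₀ a₁ * b₀ + excessDrop ε b₀ b₁ * a₀

theorem one_sub_mul_le_mul_add_pinLoss (ε : ℝ) {a₀ a₁ b₀ b₁ : ℝ} (ha₀ : 0 ≤ a₀)
    (ha₁ : 0 ≤ a₁) (hb₀ : 0 ≤ b₀) (hb₁ : 0 ≤ b₁) :
    (1 - ε) * (a₀ * b₀) ≤ a₁ * b₁ + pinLoss ε a₀ a₁ b₀ b₁ := by
  have ha := le_posPart (a₀ - a₁)
  have hb := le_posPart (b₀ - b₁)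
  have ha' := posPart_nonneg (a₀ - a₁)
  have hb' := posPart_nonneg (b₀ - b₁)
  have h : a₀ * b₀ ≤ a₁ * b₁ + (a₀ - a₁)⁺ * b₀ + (b₀ - b₁)⁺ * a₀ := by
    rcases le_total a₀ a₁ with hle | hle
    · nlinarith
    · nlinarith
  rw [pinLoss, excessDrop, excessDrop]
  linarith

theorem neg_mul_le_pinLoss (ε a₁ b₁ : ℝ) {a₀ b₀ : ℝ} (ha₀ : 0 ≤ a₀) (hb₀ : 0 ≤ b₀) :
    -ε * (a₀ * b₀) ≤ pinLoss ε a₀ a₁ b₀ b₁ := by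
  rw [pinLoss, excessDrop, excessDrop]
  linarith [mul_nonneg (posPart_nonneg (a₀ - a₁)) hb₀, mul_nonneg (posPart_nonneg (b₀ - b₁)) ha₀]

theorem excessDrop_expect_le {κ : Type*} [Fintype κ] (ε : ℝ) (m₀ m₁ : κ → ℝ) :
    excessDrop ε (𝔼 a, m₀ a) (𝔼 a, m₁ a) ≤ 𝔼 a, excessDrop ε (m₀ a) (m₁ a) := by
  have hpos : (𝔼 a, m₀ a - 𝔼 a, m₁ a)⁺ ≤ 𝔼 a, (m₀ a - m₁ a)⁺ := by
    rw [← expect_sub_distrib]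
    exact sup_le (expect_le_expect fun a _ => le_posPart _)
      (expect_nonneg fun a _ => posPart_nonneg _)
  simp only [excessDrop, expect_sub_distrib, ← mul_expect]
  exact sub_le_sub_right hpos _

theorem pinLoss_expect_le {κ κ' : Type*} [Fintype κ] [Fintype κ']
    (ε : ℝ) {a₀ : κ → ℝ} (a₁ : κ → ℝ) {b₀ : κ' → ℝ} (b₁ : κ' → ℝ) (ha₀ : 0 ≤ a₀) (hb₀ : 0 ≤ b₀) :
    pinLoss ε (𝔼 s, a₀ s) (𝔼 s, a₁ s) (𝔼 t, b₀ t) (𝔼 t, b₁ t) ≤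
      𝔼 s, 𝔼 t, pinLoss ε (a₀ s) (a₁ s) (b₀ t) (b₁ t) := by
  simp only [pinLoss, expect_add_distrib, ← mul_expect, ← expect_mul]
  exact add_le_add
    (mul_le_mul_of_nonneg_right (excessDrop_expect_le ..) (expect_nonneg fun t _ => hb₀ t))
    (mul_le_mul_of_nonneg_right (excessDrop_expect_le ..) (expect_nonneg fun s _ => ha₀ s))

/-- The error term in the comparison of pinnings, obtained from the level-one inequality with
`t = ε / 8`. -/
def pinError (ε : ℝ) (N : ℕ) : ℝ := 64 / ε * Real.exp (-(ε ^ 2 / 128 * N))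

theorem sum_two_mul_excessDrop_le [Nonempty ι] {ε : ℝ} (hε : 0 < ε) (hε₁ : ε ≤ 1)
    {f : (ι → Bool) → ℝ} (hf : f ∈ Set.Icc 0 1) (σ : ι → Bool) :
    ∑ j with σ j, 2 * excessDrop ε (pinnedMean f σ j false) (pinnedMean f σ j true) ≤
      (ε / 2 * Fintype.card ι - ε * #{j | σ j}) * subcubeMean f σ +
        Fintype.card ι * (pinError ε (Fintype.card ι) / 2) := by
  have hmean {j : ι} (hj : σ j = true) :
      pinnedMean f σ j false + pinnedMean f σ j true = 2 * subcubeMean f σ := by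
    rw [pinnedMean_eq_sliceMean hj, pinnedMean_eq_sliceMean hj, sliceMean_false_add_true]
    rfl
  have hlevel := sum_abs_pinnedMean_sub_le hf σ (t := ε / 8) (by positivity)
  have herror : 2 * (2 / (ε / 8) * Real.exp (-((ε / 8) ^ 2 / 2 * Fintype.card ι))) =
      pinError ε (Fintype.card ι) / 2 := by
    rw [pinError]
    ring_nf
  have hcard : pinError ε (Fintype.card ι) / 2 ≤
      Fintype.card ι * (pinError ε (Fintype.card ι) / 2) :=
    le_mul_of_one_le_left (by rw [pinError]; positivity) (mod_cast Fintype.card_pos)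
  calc ∑ j with σ j, 2 * excessDrop ε (pinnedMean f σ j false) (pinnedMean f σ j true)
    _ ≤ ∑ j with σ j,
          (2 * |pinnedMean f σ j false - pinnedMean f σ j true| - ε * subcubeMean f σ) :=
        sum_le_sum fun j hj => two_mul_excessDrop_le hε.le hε₁ (hmean (mem_filter.1 hj).2)
    _ = 2 * ∑ j with σ j, |pinnedMean f σ j false - pinnedMean f σ j true| -
          #{j | σ j} * (ε * subcubeMean f σ) := by
        rw [sum_sub_distrib, ← mul_sum, sum_const, nsmul_eq_mul]
    _ ≤ _ := by linarith

theorem expect_ite_excessDrop_mul_le [Nonempty ι] {ε : ℝ} (hε : 0 < ε) (hε₁ : ε ≤ 1)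
    {f g : (ι → Bool) → ℝ} (hf : f ∈ Set.Icc 0 1) (hg : g ∈ Set.Icc 0 1) (σ : ι → Bool) :
    𝔼 j, (if σ j then 2 * (excessDrop ε (pinnedMean f σ j false) (pinnedMean f σ j true) *
      pinnedMean g σᶜ j false) else 0) ≤
      (ε / 2 - ε * 𝔼 j, if σ j then 1 else 0) * (subcubeMean f σ * subcubeMean g σᶜ) +
        pinError ε (Fintype.card ι) / 2 := by
  have hg₀ : 0 ≤ subcubeMean g σᶜ := expect_nonneg fun a _ => hg.1 _
  have hg₁ : subcubeMean g σᶜ ≤ 1 := expect_le univ_nonempty fun a _ => hg.2 _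
  have hpin (j : ι) (hj : j ∈ univ.filter fun j => σ j = true) :
      pinnedMean g σᶜ j false = subcubeMean g σᶜ :=
    pinnedMean_false (by simpa using hj) g
  have herror : 0 ≤ pinError ε (Fintype.card ι) / 2 := by rw [pinError]; positivity
  have hN : (0 : ℝ) < Fintype.card ι := mod_cast Fintype.card_pos
  rw [Fintype.expect_eq_sum_div_card, Fintype.expect_eq_sum_div_card, ← sum_filter, sum_boole,
    div_le_iff₀ hN]
  calc ∑ j with σ j, 2 * (excessDrop ε (pinnedMean f σ j false) (pinnedMean f σ j true) *
        pinnedMean g σᶜ j false)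
    _ = (∑ j with σ j, 2 * excessDrop ε (pinnedMean f σ j false) (pinnedMean f σ j true)) *
          subcubeMean g σᶜ := by
        rw [sum_mul]
        exact sum_congr rfl fun j hj => by rw [hpin j hj, mul_assoc]
    _ ≤ ((ε / 2 * Fintype.card ι - ε * #{j | σ j}) * subcubeMean f σ +
          Fintype.card ι * (pinError ε (Fintype.card ι) / 2)) * subcubeMean g σᶜ :=
        mul_le_mul_of_nonneg_right (sum_two_mul_excessDrop_le hε hε₁ hf σ) hg₀
    _ ≤ (ε / 2 * Fintype.card ι - ε * #{j | σ j}) * subcubeMean f σ * subcubeMean g σᶜ +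
          Fintype.card ι * (pinError ε (Fintype.card ι) / 2) := by
        rw [add_mul]
        exact add_le_add le_rfl (mul_le_of_le_one_right (by positivity) hg₁)
    _ = _ := by field_simp

theorem expect_excessDrop_mul_eq (ε : ℝ) (f g : (ι → Bool) → ℝ) :
    𝔼 σ, 𝔼 j, excessDrop ε (pinnedMean f σ j false) (pinnedMean f σ j true) *
      pinnedMean g σᶜ j false =
    𝔼 σ, 𝔼 j, if σ j then 2 * (excessDrop ε (pinnedMean f σ j false) (pinnedMean f σ j true) *
      pinnedMean g σᶜ j false) else 0 := by
  have hcompl (σ : ι → Bool) (j : ι) (c : Bool) :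
      (Function.update σ j c)ᶜ = Function.update σᶜ j !c := by
    ext u
    by_cases h : u = j <;> simp [h]
  rw [expect_comm]
  conv_rhs => rw [expect_comm]
  refine expect_congr rfl fun j _ => ?_
  rw [← expect_ite_two_mul j]
  simp [hcompl, pinnedMean_update]

theorem expect_pinLoss_pinnedMean_le [Nonempty ι] {ε : ℝ} (hε : 0 < ε) (hε₁ : ε ≤ 1)
    {f g : (ι → Bool) → ℝ} (hf : f ∈ Set.Icc 0 1) (hg : g ∈ Set.Icc 0 1) :
    𝔼 σ, 𝔼 j, pinLoss ε (pinnedMean f σ j false) (pinnedMean f σ j true)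
      (pinnedMean g σᶜ j false) (pinnedMean g σᶜ j true) ≤ pinError ε (Fintype.card ι) := by
  -- Complementing `σ` exchanges the roles of `f` and `g`.
  have hswap : 𝔼 σ, 𝔼 j, excessDrop ε (pinnedMean g σᶜ j false) (pinnedMean g σᶜ j true) *
      pinnedMean f σ j false = 𝔼 σ, 𝔼 j, if σᶜ j then 2 * (excessDrop ε (pinnedMean g σᶜ j false)
        (pinnedMean g σᶜ j true) * pinnedMean f σ j false) else 0 := by
    have h := ((expect_compl _).trans (expect_excessDrop_mul_eq ε g f)).trans (expect_compl _).symm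
    simpa only [compl_compl] using h
  have hcard (σ : ι → Bool) :
      (𝔼 j, if σ j then (1 : ℝ) else 0) + 𝔼 j, (if σᶜ j then (1 : ℝ) else 0) = 1 := by
    rw [← expect_add_distrib, ← Fintype.expect_one (ι := ι)]
    refine expect_congr rfl fun j _ => ?_
    cases h : σ j <;> simp [h]
  simp only [pinLoss, expect_add_distrib]
  rw [expect_excessDrop_mul_eq, hswap, ← expect_add_distrib]
  refine expect_le univ_nonempty fun σ _ => ?_
  have hfg := expect_ite_excessDrop_mul_le hε hε₁ hf hg σ
  have hgf := expect_ite_excessDrop_mul_le hε hε₁ hg hf σᶜ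
  rw [compl_compl] at hgf
  linear_combination hfg + hgf - ε * subcubeMean f σ * subcubeMean g σᶜ * hcard σ

end Cube

/-! ### Butterfly networks -/

section Network

/-- The edge gadget, evaluated at the sum of the two players' labels of an edge. -/
def gadget (s : ZMod 4) : ZMod 2 := if s = 2 ∨ s = 3 then 1 else 0

/-- The amount that a player whose hidden bit is true adds to the label of an edge. -/
def incr (s : ZMod 4) : ZMod 4 := if s = 0 ∨ s = 2 then 1 else -1

theorem gadget_add_incr : ∀ (A B : Bool) (s : ZMod 4),
    gadget (s + (if A then incr s else 0) + (if B then incr s else 0)) =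
      gadget s + if A && B then 1 else 0 := by
  decide

/-- The nodes of a butterfly network: a level and a position. -/
abbrev Node (d N : ℕ) := ZMod d × ZMod N

/-- The links of one network, given by a bit and the tail: each node has two outgoing links. -/
abbrev Link (d N : ℕ) := Bool × Node d N

/-- The edges of five parallel copies of the network on the same nodes. -/
abbrev Edge (d N : ℕ) := ZMod 5 × Link d N

/-- The edge slots at a node: the copy, the bit, and whether the edge is incoming. -/
abbrev Slot := ZMod 5 × Bool × Bool

variable {d N : ℕ}

/-- The head of the outgoing link labelled `c`: on level `l` the bit `c` adds `c * 2 ^ l` to the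
position, and the levels are cyclic. -/
def step (c : Bool) : Node d N ≃ Node d N where
  toFun v := (v.1 + 1, v.2 + if c then 2 ^ v.1.val else 0)
  invFun v := (v.1 - 1, v.2 - if c then 2 ^ (v.1 - 1).val else 0)
  left_inv v := by simp
  right_inv v := by simp

/-- The boundary modulo two of a chain of links. -/
def linkBoundary (z : Link d N → ZMod 2) (v : Node d N) : ZMod 2 :=
  ∑ c, (z (c, (step c).symm v) + z (c, v))

theorem sum_linkBoundary [NeZero d] [NeZero N] (z : Link d N → ZMod 2) :
    ∑ v, linkBoundary z v = 0 := by
  simp only [linkBoundary]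
  rw [sum_comm]
  refine sum_eq_zero fun c _ => ?_
  rw [sum_add_distrib, Equiv.sum_comp (step c).symm fun v => z (c, v)]
  exact CharTwo.add_self_eq_zero _

/-- The unit chain at the position `u` of level zero. -/
def port (u : ZMod N) (v : Node d N) : ZMod 2 := if v = (0, u) then 1 else 0

theorem sum_port [NeZero d] [NeZero N] (u : ZMod N) : ∑ v : Node d N, port u v = 1 := by
  simp [port]

/-- The start, on level zero, of the path of displacement `w` through a link, if there is one. On
level `l` that path takes the link labelled by the `l`-th binary digit of `w`. -/
def pathStart (w : ZMod N) (e : Link d N) : Option (ZMod N) :=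
  if e.1 = w.val.testBit e.2.1.val then some (e.2.2 - (w.val % 2 ^ e.2.1.val : ℕ)) else none

/-- The indicator of the links on the path of displacement `w` from `u`. -/
def pathChain (w u : ZMod N) (e : Link d N) : ZMod 2 := if pathStart w e = some u then 1 else 0

theorem sum_pathChain_outgoing (w u : ZMod N) (v : Node d N) :
    ∑ c, pathChain w u (c, v) = if v.2 = u + (w.val % 2 ^ v.1.val : ℕ) then 1 else 0 := by
  rw [sum_eq_single (w.val.testBit v.1.val) (fun c _ hc => by simp [pathChain, pathStart, hc])
    (by simp)]
  simp [pathChain, pathStart, sub_eq_iff_eq_add]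

theorem sum_pathChain_incoming (w u : ZMod N) (v : Node d N) :
    ∑ c, pathChain w u (c, (step c).symm v) =
      if v.2 = u + (w.val % 2 ^ ((v.1 - 1).val + 1) : ℕ) then 1 else 0 := by
  obtain ⟨l, p⟩ := v
  have hmod : ((w.val % 2 ^ ((l - 1).val + 1) : ℕ) : ZMod N) =
      (w.val % 2 ^ (l - 1).val : ℕ) +
        if w.val.testBit (l - 1).val then 2 ^ (l - 1).val else 0 := by
    rw [Nat.mod_pow_succ, Nat.testBit_eq_decide_div_mod_eq]
    rcases Nat.mod_two_eq_zero_or_one (w.val / 2 ^ (l - 1).val) with h | h <;> simp [h]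
  rw [sum_eq_single (w.val.testBit (l - 1).val)
    (fun c _ hc => by simp [pathChain, pathStart, step, hc]) (by simp), hmod]
  simp only [pathChain, pathStart, step, Equiv.coe_fn_symm_mk, if_true, Option.some.injEq,
    sub_eq_iff_eq_add, add_assoc]

theorem val_sub_one_add_one [NeZero d] (l : ZMod d) :
    (l - 1).val + 1 = if l = 0 then d else l.val := by
  obtain rfl | hd := eq_or_ne d 1
  · simp [Subsingleton.elim l 0]
  have : Fact (1 < d) := ⟨by have := NeZero.ne d; omega⟩
  split_ifs with hl
  · have := NeZero.pos d
    rw [hl, zero_sub, ZMod.neg_val, ZMod.val_one]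
    simp
    omega
  · have : 1 ≤ l.val := Nat.one_le_iff_ne_zero.2 (by rwa [ne_eq, ZMod.val_eq_zero])
    rw [ZMod.val_sub (by rwa [ZMod.val_one]), ZMod.val_one]
    omega

theorem linkBoundary_pathChain [NeZero d] [NeZero N] (h : N ≤ 2 ^ d) (w u : ZMod N)
    (v : Node d N) : linkBoundary (pathChain w u) v = port u v + port (u + w) v := by
  obtain ⟨l, p⟩ := v
  rw [linkBoundary, sum_add_distrib, sum_pathChain_incoming, sum_pathChain_outgoing,
    val_sub_one_add_one]
  obtain rfl | hl := eq_or_ne l 0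
  · have : w.val % 2 ^ d = w.val := Nat.mod_eq_of_lt ((ZMod.val_lt w).trans_le h)
    simp [this, port, Nat.mod_one, add_comm]
  · simp [port, hl, CharTwo.add_self_eq_zero]

/-- The edge in a given slot of a node. -/
def incident (v : Node d N) (q : Slot) : Edge d N :=
  (q.1, q.2.1, if q.2.2 then (step q.2.1).symm v else v)

/-- The boundary modulo two of a chain of edges. -/
def boundary (z : Edge d N → ZMod 2) (v : Node d N) : ZMod 2 := ∑ q : Slot, z (incident v q)

theorem boundary_add (z z' : Edge d N → ZMod 2) (v : Node d N) :
    boundary (fun e => z e + z' e) v = boundary z v + boundary z' v :=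
  sum_add_distrib

theorem boundary_eq_sum_linkBoundary (z : Edge d N → ZMod 2) (v : Node d N) :
    boundary z v = ∑ i, linkBoundary (fun e => z (i, e)) v := by
  simp [boundary, linkBoundary, incident, Fintype.sum_prod_type]

theorem sum_boundary [NeZero d] [NeZero N] (z : Edge d N → ZMod 2) : ∑ v, boundary z v = 0 := by
  simp only [boundary_eq_sum_linkBoundary]
  rw [sum_comm]
  exact sum_eq_zero fun i _ => sum_linkBoundary _

/-- The edges on the paths started by a player: in copy `i` the paths have displacement
`v (i + 1) - v i`, and one is started at every position `u` for which `c i u` is true. -/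
def pathBits (v : ZMod 5 → ZMod N) (c : ZMod 5 → ZMod N → Bool) (e : Edge d N) : Bool :=
  (pathStart (v (e.1 + 1) - v e.1) e.2).elim false (c e.1)

theorem boundary_pathBits [NeZero d] [NeZero N] (h : N ≤ 2 ^ d) {v : ZMod 5 → ZMod N}
    {c c' : ZMod 5 → ZMod N → Bool} {p : ZMod 5 → Bool}
    (hc : ∀ i u, (c i u && c' i u) = (decide (u = v i) && p i)) (u : Node d N) :
    boundary (fun e => if pathBits v c e && pathBits v c' e then 1 else 0) u =
      ∑ i, if p i then port (v i) u + port (v (i + 1)) u else 0 := by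
  rw [boundary_eq_sum_linkBoundary]
  refine sum_congr rfl fun i _ => ?_
  have hbits (e : Link d N) : (if pathBits v c (i, e) && pathBits v c' (i, e) then (1 : ZMod 2)
      else 0) = if p i then pathChain (v (i + 1) - v i) (v i) e else 0 := by
    rcases h : pathStart (v (i + 1) - v i) e with _ | u <;>
      simp [pathBits, pathChain, h, hc, ite_and, and_comm]
  simp only [hbits]
  cases p i
  · simp [linkBoundary]
  · simpa using linkBoundary_pathChain h (v (i + 1) - v i) (v i) u

end Network

/-! ### Contexts -/

section Absorb

variable {E : Type*}

/-- The edge labels of a player with hidden bits `A` and base labels `z`: the second component of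
`z e` is the total of both players' base labels, the first one the share of this player. -/
def label (A : E → Bool) (z : E → ZMod 4 × ZMod 4) (e : E) : ZMod 4 :=
  (z e).1 + if A e then incr (z e).2 else 0

/-- The base labels from the point of view of the other player. -/
def exchange (z : E → ZMod 4 × ZMod 4) (e : E) : ZMod 4 × ZMod 4 := ((z e).2 - (z e).1, (z e).2)

/-- The base labels after both players have applied the hidden bits `A` and `B`. -/
def absorb (A B : E → Bool) (z : E → ZMod 4 × ZMod 4) (e : E) : ZMod 4 × ZMod 4 :=
  (label A z e, label A z e + label B (exchange z) e)

theorem exchange_exchange (z : E → ZMod 4 × ZMod 4) : exchange (exchange z) = z := by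
  ext e <;> simp [exchange]

theorem exchange_absorb (A B : E → Bool) (z : E → ZMod 4 × ZMod 4) :
    exchange (absorb A B z) = absorb B A (exchange z) := by
  ext e
  · exact add_sub_cancel_left _ _
  · rw [absorb, exchange_exchange]
    exact add_comm _ _

theorem gadget_label_add_label (A B : E → Bool) (z : E → ZMod 4 × ZMod 4) (e : E) :
    gadget (label A z e + label B (exchange z) e) =
      gadget (z e).2 + if A e && B e then 1 else 0 := by
  rw [← gadget_add_incr]
  congr 1
  simp only [label, exchange]
  ring

theorem bijective_absorb [Finite E] (A B : E → Bool) : Function.Bijective (absorb A B) := by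
  have hkey : ∀ A B : Bool, Function.Injective fun z : ZMod 4 × ZMod 4 =>
      (z.1 + (if A then incr z.2 else 0), z.1 + (if A then incr z.2 else 0) +
        (z.2 - z.1 + if B then incr z.2 else 0)) := by
    unfold Function.Injective
    decide
  exact Finite.injective_iff_bijective.1 fun z z' h =>
    funext fun e => hkey (A e) (B e) (congrFun h e)

theorem label_absorb {A A' B : E → Bool} (hA' : Disjoint A A') (hB : Disjoint A B)
    (z : E → ZMod 4 × ZMod 4) : label A (absorb A' B z) = label (A ⊔ A') z := by
  ext e
  cases hA : A e
  · simp [label, absorb, hA]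
  · have hA'e := Pi.disjoint_iff.1 hA' e
    have hBe := Pi.disjoint_iff.1 hB e
    rw [hA] at hA'e hBe
    have hA'e : A' e = false := top_disjoint.1 hA'e
    have hBe : B e = false := top_disjoint.1 hBe
    simp [label, absorb, exchange, hA, hA'e, hBe]

end Absorb

section Contexts

variable {d N : ℕ}

/-- The pattern which is false exactly at `i`. -/
def allBut (i : ZMod 5) : ZMod 5 → Bool := Function.update ⊤ i false

/-- The parity defect at `u` when the paths from the ports in `p` have been flipped. -/
def defect (v : ZMod 5 → ZMod N) (p : ZMod 5 → Bool) (u : Node d N) : ZMod 2 :=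
  ∑ i, (if p i then port (v i) u + port (v (i + 1)) u else 0) + ∑ i, port (v i) u

theorem defect_top (v : ZMod 5 → ZMod N) (u : Node d N) :
    defect v ⊤ u = ∑ i, port (v i) u := by
  have key : ∀ δ : ZMod 5 → ZMod 2,
      ∑ i, (if (⊤ : ZMod 5 → Bool) i then δ i + δ (i + 1) else 0) + ∑ i, δ i = ∑ i, δ i := by
    decide
  exact key fun i => port (v i) u

theorem defect_allBut (v : ZMod 5 → ZMod N) (i : ZMod 5) (u : Node d N) :
    defect v (allBut i) u = port (v (i + 2)) u + port (v (i + 3)) u + port (v (i + 4)) u := by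
  have key : ∀ (δ : ZMod 5 → ZMod 2) (i : ZMod 5),
      ∑ j, (if allBut i j then δ j + δ (j + 1) else 0) + ∑ j, δ j =
        δ (i + 2) + δ (i + 3) + δ (i + 4) := by decide
  exact key (fun j => port (v j) u) i

theorem defect_allBut_inf (v : ZMod 5 → ZMod N) (i : ZMod 5) (u : Node d N) :
    defect v (allBut i ⊓ allBut (i + 2)) u = port (v (i + 4)) u := by
  have key : ∀ (δ : ZMod 5 → ZMod 2) (i : ZMod 5),
      ∑ j, (if (allBut i ⊓ allBut (i + 2)) j then δ j + δ (j + 1) else 0) + ∑ j, δ j =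
        δ (i + 4) := by decide
  exact key (fun j => port (v j) u) i

/-- The information shared by the two players: the positions of the five ports, the first player's
share of the positions in each copy of the network, and the base labels. -/
structure Context (d N : ℕ) where
  pos : ZMod 5 → ZMod N
  side : ZMod 5 → ZMod N → Bool
  base : Edge d N → ZMod 4 × ZMod 4

namespace Context

/-- A context as a triple. -/
def equivProd : Context d N ≃ (ZMod 5 → ZMod N) × (ZMod 5 → ZMod N → Bool) ×
    (Edge d N → ZMod 4 × ZMod 4) where
  toFun κ := (κ.pos, κ.side, κ.base)
  invFun p := ⟨p.1, p.2.1, p.2.2⟩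

/-- The context from the point of view of the other player. -/
def swap (κ : Context d N) : Context d N := ⟨κ.pos, κ.sideᶜ, exchange κ.base⟩

/-- The positions from which a player starts a path: the random set `a` on the player's side, with
the membership of the port of copy `i` replaced by `q i`. -/
def starts (κ : Context d N) (q : ZMod 5 → Bool) (a : ZMod 5 → ZMod N → Bool) (i : ZMod 5) :
    ZMod N → Bool :=
  Function.update (a i ⊓ κ.side i) (κ.pos i) (q i)

/-- The edge labels of a player. -/
def labels (κ : Context d N) (q : ZMod 5 → Bool) (a : ZMod 5 → ZMod N → Bool) :
    Edge d N → ZMod 4 :=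
  label (pathBits κ.pos (κ.starts q a)) κ.base

theorem starts_and_starts_swap (κ : Context d N) (p q : ZMod 5 → Bool)
    (a b : ZMod 5 → ZMod N → Bool) (i : ZMod 5) (u : ZMod N) :
    (κ.starts p a i u && κ.swap.starts q b i u) = (decide (u = κ.pos i) && (p ⊓ q) i) := by
  obtain rfl | hu := eq_or_ne u (κ.pos i)
  · simp [starts, swap]
  · cases h : κ.side i u <;> simp [starts, swap, hu, h]

end Context

variable [NeZero d] [NeZero N]

/-- The number of nodes with a parity defect beyond the first. -/
def defectExcess (v : ZMod 5 → ZMod N) (p : ZMod 5 → Bool) : ℝ :=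
  #{u : Node d N | defect v p u ≠ 0} - 1

theorem defectExcess_top_le (v : ZMod 5 → ZMod N) : defectExcess (d := d) v ⊤ ≤ 4 := by
  have h : #{u : Node d N | defect v ⊤ u ≠ 0} ≤ 5 :=
    calc #{u : Node d N | defect v ⊤ u ≠ 0}
      _ ≤ #(univ.image fun i => ((0 : ZMod d), v i)) := by
          refine card_le_card fun u hu => ?_
          rw [mem_filter_univ, defect_top] at hu
          obtain ⟨i, -, hi⟩ := exists_ne_zero_of_sum_ne_zero hu
          exact mem_image.2 ⟨i, mem_univ i, (not_imp_comm.1 (if_neg ·) hi).symm⟩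
      _ ≤ 5 := card_image_le
  have : (#{u : Node d N | defect v ⊤ u ≠ 0} : ℝ) ≤ 5 := mod_cast h
  rw [defectExcess]
  linarith

theorem le_defectExcess_allBut (v : ZMod 5 → ZMod N) (i : ZMod 5) :
    2 - 2 * ((if v (i + 2) = v (i + 3) then 1 else 0) + (if v (i + 2) = v (i + 4) then 1 else 0) +
      (if v (i + 3) = v (i + 4) then 1 else 0)) ≤ defectExcess (d := d) v (allBut i) := by
  have hsum : ∑ u : Node d N, defect v (allBut i) u = 1 := by
    simp only [defect_allBut, sum_add_distrib, sum_port]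
    decide
  obtain ⟨u, -, hu⟩ := exists_ne_zero_of_sum_ne_zero (hsum.trans_ne one_ne_zero)
  have hone : (1 : ℝ) ≤ #{u : Node d N | defect v (allBut i) u ≠ 0} :=
    Nat.one_le_cast.2 (card_pos.2 ⟨u, by simpa using hu⟩)
  rw [defectExcess]
  by_cases h : v (i + 2) = v (i + 3) ∨ v (i + 2) = v (i + 4) ∨ v (i + 3) = v (i + 4)
  · rcases h with h | h | h <;> rw [if_pos h] <;> split_ifs <;> linarith
  obtain ⟨h₁, h₂, h₃⟩ := by simpa only [not_or] using h
  have hsub : ({(0, v (i + 2)), (0, v (i + 3)), (0, v (i + 4))} : Finset (Node d N)) ⊆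
      ({u | defect v (allBut i) u ≠ 0} : Finset (Node d N)) := by
    have := Ne.symm h₁
    have := Ne.symm h₂
    have := Ne.symm h₃
    simp [insert_subset_iff, defect_allBut, port, *]
  have hthree := card_le_card hsub
  rw [card_eq_three.2 ⟨_, _, _, by simpa using h₁, by simpa using h₂, by simpa using h₃, rfl⟩]
    at hthree
  have : (3 : ℝ) ≤ #{u : Node d N | defect v (allBut i) u ≠ 0} := mod_cast hthree
  rw [if_neg h₁, if_neg h₂, if_neg h₃]
  linarith

theorem defectExcess_allBut_inf (v : ZMod 5 → ZMod N) (i : ZMod 5) :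
    defectExcess (d := d) v (allBut i ⊓ allBut (i + 2)) = 0 := by
  simp only [defectExcess, defect_allBut_inf]
  simp [port, filter_eq']

/-- The node charges of total one. -/
abbrev Charge (d N : ℕ) [NeZero d] [NeZero N] := {χ : Node d N → ZMod 2 // ∑ u, χ u = 1}

/-- The parity constraint of the node `u` for the local labels `α` of the first player, when the
second player holds the edge labels `y.1` and the node charges `y.2`. -/
def ParityHolds (y : (Edge d N → ZMod 4) × Charge d N) (u : Node d N) (α : Slot → ZMod 4) : Prop :=
  ∑ s, gadget (α s + y.1 (incident u s)) + y.2.1 u = 0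

theorem excess_parityHolds (y : (Edge d N → ZMod 4) × Charge d N) (x : Edge d N → ZMod 4) :
    excess incident (ParityHolds y) x =
      #{u | boundary (fun e => gadget (x e + y.1 e)) u + y.2.1 u ≠ 0} - 1 := by
  simp only [excess, ParityHolds, boundary, Function.comp_apply]

theorem excess_parityHolds_nonneg (y : (Edge d N → ZMod 4) × Charge d N) (x : Edge d N → ZMod 4) :
    0 ≤ excess incident (ParityHolds y) x := by
  have h : ∑ u, (boundary (fun e => gadget (x e + y.1 e)) u + y.2.1 u) = 1 := by
    rw [sum_add_distrib, sum_boundary, y.2.2, zero_add]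
  obtain ⟨u, -, hu⟩ := exists_ne_zero_of_sum_ne_zero (h.trans_ne one_ne_zero)
  rw [excess_parityHolds, sub_nonneg, Nat.one_le_cast]
  exact card_pos.2 ⟨u, by simpa using hu⟩

/-- The charge for which the base labels `z` violate exactly the constraints charged by `χ`. -/
def chargeOf (z : Edge d N → ZMod 4 × ZMod 4) (χ : Charge d N) : Charge d N :=
  ⟨fun u => boundary (fun e => gadget (z e).2) u + χ.1 u, by
    rw [sum_add_distrib, sum_boundary, χ.2, zero_add]⟩

/-- The unit charges at an odd number of ports. -/
def portCharge (v : ZMod 5 → ZMod N) (I : Finset (ZMod 5)) (hI : Odd #I) : Charge d N :=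
  ⟨fun u => ∑ i ∈ I, port (v i) u, by
    rw [sum_comm]
    simp [sum_port, ZMod.natCast_eq_one_iff_odd, hI]⟩

namespace Context

instance : Fintype (Context d N) := .ofEquiv _ equivProd.symm

instance : Nonempty (Context d N) := equivProd.nonempty

theorem expect_eq (φ : Context d N → ℝ) : 𝔼 κ, φ κ = 𝔼 v, 𝔼 σ, 𝔼 z, φ ⟨v, σ, z⟩ := by
  rw [Fintype.expect_equiv equivProd φ (fun p => φ ⟨p.1, p.2.1, p.2.2⟩) fun _ => rfl]
  simp only [← univ_product_univ, expect_product]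

/-- The node charges in a context. -/
def charge (κ : Context d N) : Charge d N :=
  chargeOf κ.base (portCharge κ.pos univ (by decide))

theorem boundary_labels_add (h : N ≤ 2 ^ d) (κ : Context d N) (p q : ZMod 5 → Bool)
    (a b : ZMod 5 → ZMod N → Bool) (u : Node d N) :
    boundary (fun e => gadget (κ.labels p a e + κ.swap.labels q b e)) u + κ.charge.1 u =
      defect κ.pos (p ⊓ q) u := by
  have hgadget (e : Edge d N) : gadget (κ.labels p a e + κ.swap.labels q b e) =
      gadget (κ.base e).2 +
        if pathBits κ.pos (κ.starts p a) e && pathBits κ.pos (κ.swap.starts q b) e then 1 else 0 :=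
    gadget_label_add_label _ _ _ _
  simp only [hgadget, boundary_add]
  rw [boundary_pathBits h (κ.starts_and_starts_swap p q a b), charge, chargeOf, portCharge,
    add_add_add_comm, CharTwo.add_self_eq_zero, zero_add, defect]

theorem excess_labels (h : N ≤ 2 ^ d) (κ : Context d N) (p q : ZMod 5 → Bool)
    (a b : ZMod 5 → ZMod N → Bool) :
    excess incident (ParityHolds (κ.swap.labels q b, κ.charge)) (κ.labels p a) =
      defectExcess (d := d) κ.pos (p ⊓ q) := by
  simp only [excess_parityHolds, boundary_labels_add h, defectExcess]

end Context

end Contexts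

/-! ### Pinning a single port -/

section SinglePort

theorem expect_eq_expect_expect_add {G K M : Type*} [AddGroup G] [Fintype G] [Fintype K]
    [Nonempty K] [AddCommMonoid M] [Module ℚ≥0 M] (φ : G → M) (t : K → G) :
    𝔼 g, φ g = 𝔼 g, 𝔼 k, φ (g + t k) := by
  have h (k : K) : 𝔼 g, φ (g + t k) = 𝔼 g, φ g :=
    Fintype.expect_equiv (Equiv.addRight (t k)) _ _ fun _ => rfl
  rw [expect_comm]
  simp only [h, Fintype.expect_const]

variable {d N : ℕ}

/-- The edges on the paths in the copy `i` of the network, when they are started from `c`. -/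
def ownBits (i : ZMod 5) (v : ZMod 5 → ZMod N) (c : ZMod N → Bool) : Edge d N → Bool :=
  pathBits v (Function.update ⊥ i c)

/-- The edges on the paths outside the copy `i` of the network. -/
def otherBits (i : ZMod 5) (v : ZMod 5 → ZMod N) (c : ZMod 5 → ZMod N → Bool) : Edge d N → Bool :=
  pathBits v (Function.update c i ⊥)

theorem ownBits_sup_otherBits (i : ZMod 5) (v : ZMod 5 → ZMod N) (c : ZMod 5 → ZMod N → Bool)
    (c₀ : ZMod N → Bool) :
    ownBits (d := d) i v c₀ ⊔ otherBits i v c = pathBits v (Function.update c i c₀) := by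
  ext e
  simp only [ownBits, otherBits, pathBits, Pi.sup_apply]
  obtain rfl | he := eq_or_ne e.1 i
  · cases pathStart (v (e.1 + 1) - v e.1) e.2 <;> simp
  · cases pathStart (v (e.1 + 1) - v e.1) e.2 <;> simp [he]

theorem disjoint_ownBits_otherBits (i : ZMod 5) (v : ZMod 5 → ZMod N) (c : ZMod 5 → ZMod N → Bool)
    (c₀ : ZMod N → Bool) : Disjoint (ownBits (d := d) i v c₀) (otherBits i v c) := by
  refine Pi.disjoint_iff.2 fun e => disjoint_iff.2 ?_
  simp only [ownBits, otherBits, pathBits]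
  obtain rfl | he := eq_or_ne e.1 i
  · cases pathStart (v (e.1 + 1) - v e.1) e.2 <;> simp
  · cases pathStart (v (e.1 + 1) - v e.1) e.2 <;> simp [he]

theorem ownBits_congr {i : ZMod 5} {v v' : ZMod 5 → ZMod N}
    (h : v (i + 1) - v i = v' (i + 1) - v' i) (c : ZMod N → Bool) :
    ownBits (d := d) i v c = ownBits i v' c := by
  ext e
  simp only [ownBits, pathBits]
  obtain rfl | he := eq_or_ne e.1 i
  · rw [h]
  · cases pathStart (v (e.1 + 1) - v e.1) e.2 <;>
      cases pathStart (v' (e.1 + 1) - v' e.1) e.2 <;> simp [he]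

/-- The charges which remain when all paths outside the copy `i` of the network are absorbed. -/
def remainingCharge [NeZero d] [NeZero N] (i : ZMod 5) (v : ZMod 5 → ZMod N) : Charge d N :=
  portCharge v {i, i + 1}ᶜ (by revert i; decide)

namespace Context

theorem swap_swap (κ : Context d N) : κ.swap.swap = κ := by
  simp [swap, exchange_exchange]

/-- The base labels after all paths outside the copy `i` of the network have been absorbed. -/
def absorbed (κ : Context d N) (i : ZMod 5) (a b : ZMod 5 → ZMod N → Bool) :
    Edge d N → ZMod 4 × ZMod 4 :=
  absorb (otherBits i κ.pos (κ.starts ⊤ a)) (otherBits i κ.pos (κ.swap.starts ⊤ b)) κ.base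

theorem bijective_absorbed [Finite (Edge d N)] (v : ZMod 5 → ZMod N)
    (σ a b : ZMod 5 → ZMod N → Bool) (i : ZMod 5) :
    Function.Bijective fun z : Edge d N → ZMod 4 × ZMod 4 => absorbed ⟨v, σ, z⟩ i a b :=
  let κ : Context d N := ⟨v, σ, 0⟩
  bijective_absorb (otherBits i v (κ.starts ⊤ a)) (otherBits i v (κ.swap.starts ⊤ b))

theorem exchange_absorbed (κ : Context d N) (i : ZMod 5) (a b : ZMod 5 → ZMod N → Bool) :
    exchange (κ.absorbed i a b) = κ.swap.absorbed i b a := by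
  rw [absorbed, absorbed, exchange_absorb, swap_swap]
  rfl

theorem starts_update (κ : Context d N) (i : ZMod 5) (s : Bool) (a : ZMod 5 → ZMod N → Bool)
    (c : ZMod N → Bool) : κ.starts (Function.update ⊤ i s) (Function.update a i c) =
      Function.update (κ.starts ⊤ a) i (Function.update (c ⊓ κ.side i) (κ.pos i) s) := by
  ext j : 1
  obtain rfl | hj := eq_or_ne j i
  · simp [starts]
  · simp [starts, hj]

theorem labels_update (κ : Context d N) (i : ZMod 5) (s : Bool) (a b : ZMod 5 → ZMod N → Bool)
    (c : ZMod N → Bool) : κ.labels (Function.update ⊤ i s) (Function.update a i c) =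
      label (ownBits i κ.pos (Function.update (c ⊓ κ.side i) (κ.pos i) s)) (κ.absorbed i a b) := by
  rw [labels, starts_update, absorbed,
    label_absorb (disjoint_ownBits_otherBits ..) (disjoint_ownBits_otherBits ..),
    ownBits_sup_otherBits]

variable [NeZero d] [NeZero N]

theorem charge_eq_chargeOf_absorbed (h : N ≤ 2 ^ d) (κ : Context d N) (i : ZMod 5)
    (a b : ZMod 5 → ZMod N → Bool) :
    κ.charge = chargeOf (κ.absorbed i a b) (remainingCharge i κ.pos) := by
  have hstarts (j : ZMod 5) (u : ZMod N) :
      (Function.update (κ.starts ⊤ a) i ⊥ j u && Function.update (κ.swap.starts ⊤ b) i ⊥ j u) =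
        (decide (u = κ.pos j) && allBut i j) := by
    obtain rfl | hj := eq_or_ne j i
    · simp [allBut]
    · simp [hj, allBut, starts_and_starts_swap]
  have hgadget (e : Edge d N) : gadget (κ.absorbed i a b e).2 = gadget (κ.base e).2 +
      if pathBits κ.pos (Function.update (κ.starts ⊤ a) i ⊥) e &&
        pathBits κ.pos (Function.update (κ.swap.starts ⊤ b) i ⊥) e then 1 else 0 :=
    gadget_label_add_label _ _ _ _
  have hports : ∀ (δ : ZMod 5 → ZMod 2) (i : ZMod 5), ∑ j, δ j =
      ∑ j, (if allBut i j then δ j + δ (j + 1) else 0) + ∑ j ∈ {i, i + 1}ᶜ, δ j := by decide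
  ext u
  simp only [charge, chargeOf, remainingCharge, portCharge, hgadget, boundary_add]
  rw [boundary_pathBits h hstarts, add_assoc, ← hports fun j => port (κ.pos j) u]

end Context

/-- The first player's weight as a function of the set of starts in the copy `i` of the network,
when all other paths have been absorbed into the base labels `z`. -/
def firstSection (f : (Edge d N → ZMod 4) → ℝ) (i : ZMod 5) (v : ZMod 5 → ZMod N)
    (z : Edge d N → ZMod 4 × ZMod 4) (c : ZMod N → Bool) : ℝ :=
  f (label (ownBits i v c) z)

theorem firstSection_congr (f : (Edge d N → ZMod 4) → ℝ) {i : ZMod 5} {v v' : ZMod 5 → ZMod N}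
    (h : v (i + 1) - v i = v' (i + 1) - v' i) (z : Edge d N → ZMod 4 × ZMod 4) :
    firstSection f i v z = firstSection f i v' z := by
  ext c
  rw [firstSection, firstSection, ownBits_congr h]

variable [NeZero d] [NeZero N]

/-- The analogue of `firstSection` for the second player. -/
def secondSection (g : (Edge d N → ZMod 4) × Charge d N → ℝ) (i : ZMod 5) (v : ZMod 5 → ZMod N)
    (z : Edge d N → ZMod 4 × ZMod 4) (c : ZMod N → Bool) : ℝ :=
  g (label (ownBits i v c) (exchange z), chargeOf z (remainingCharge i v))

theorem secondSection_congr (g : (Edge d N → ZMod 4) × Charge d N → ℝ) {i : ZMod 5}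
    {v v' : ZMod 5 → ZMod N} (h : v (i + 1) - v i = v' (i + 1) - v' i)
    (hv : ∀ j ∈ ({i, i + 1}ᶜ : Finset (ZMod 5)), v j = v' j) (z : Edge d N → ZMod 4 × ZMod 4) :
    secondSection g i v z = secondSection g i v' z := by
  have hcharge : remainingCharge (d := d) i v = remainingCharge i v' :=
    Subtype.ext <| funext fun u => by
      simp only [remainingCharge, portCharge]
      exact sum_congr rfl fun j hj => by rw [hv j hj]
  ext c
  rw [secondSection, secondSection, ownBits_congr h, hcharge]

/-- The loss from pinning the port of the copy `i` of the network, when the other ports are pinned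
to `true` and all other paths have been absorbed. -/
def ownLoss (ε : ℝ) (f : (Edge d N → ZMod 4) → ℝ) (g : (Edge d N → ZMod 4) × Charge d N → ℝ)
    (i : ZMod 5) (v : ZMod 5 → ZMod N) (z : Edge d N → ZMod 4 × ZMod 4) (τ : ZMod N → Bool) : ℝ :=
  pinLoss ε
    (pinnedMean (firstSection f i v z) τ (v i) false)
    (pinnedMean (firstSection f i v z) τ (v i) true)
    (pinnedMean (secondSection g i v z) τᶜ (v i) false)
    (pinnedMean (secondSection g i v z) τᶜ (v i) true)

namespace Context

/-- The average of the first player's weight over the random bits. -/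
def firstMean (κ : Context d N) (f : (Edge d N → ZMod 4) → ℝ) (q : ZMod 5 → Bool) : ℝ :=
  𝔼 a, f (κ.labels q a)

/-- The average of the second player's weight over the random bits. -/
def secondMean (κ : Context d N) (g : (Edge d N → ZMod 4) × Charge d N → ℝ) (q : ZMod 5 → Bool) :
    ℝ :=
  𝔼 b, g (κ.swap.labels q b, κ.charge)

/-- The loss from changing the pinned value of the port `i` from `false` to `true`. -/
def portLoss (κ : Context d N) (ε : ℝ) (f : (Edge d N → ZMod 4) → ℝ)
    (g : (Edge d N → ZMod 4) × Charge d N → ℝ) (i : ZMod 5) : ℝ :=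
  pinLoss ε (κ.firstMean f (allBut i)) (κ.firstMean f ⊤)
    (κ.secondMean g (allBut i)) (κ.secondMean g ⊤)

theorem portLoss_le (h : N ≤ 2 ^ d) (κ : Context d N) (ε : ℝ) {f : (Edge d N → ZMod 4) → ℝ}
    {g : (Edge d N → ZMod 4) × Charge d N → ℝ} (hf : 0 ≤ f) (hg : 0 ≤ g) (i : ZMod 5) :
    κ.portLoss ε f g i ≤ 𝔼 a, 𝔼 b, ownLoss ε f g i κ.pos (κ.absorbed i a b) (κ.side i) := by
  have htop : (⊤ : ZMod 5 → Bool) = Function.update ⊤ i true :=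
    (Function.update_eq_self i (⊤ : ZMod 5 → Bool)).symm
  have hfirst (s : Bool) (a b) : 𝔼 c, f (κ.labels (Function.update ⊤ i s) (Function.update a i c)) =
      pinnedMean (firstSection f i κ.pos (κ.absorbed i a b)) (κ.side i) (κ.pos i) s := by
    simp only [labels_update κ i s a b]
    rfl
  have hsecond (s : Bool) (a b) :
      𝔼 c, g (κ.swap.labels (Function.update ⊤ i s) (Function.update b i c), κ.charge) =
      pinnedMean (secondSection g i κ.pos (κ.absorbed i a b)) (κ.side i)ᶜ (κ.pos i) s := by
    simp only [labels_update κ.swap i s b a, ← exchange_absorbed,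
      charge_eq_chargeOf_absorbed h κ i a b]
    rfl
  rw [portLoss, firstMean, firstMean, secondMean, secondMean, allBut, htop,
    ← expect_expect_update i fun a => f (κ.labels _ a),
    ← expect_expect_update i fun a => f (κ.labels _ a),
    ← expect_expect_update i fun b => g (κ.swap.labels _ b, κ.charge),
    ← expect_expect_update i fun b => g (κ.swap.labels _ b, κ.charge), ← htop]
  refine (pinLoss_expect_le ε _ _ (fun a => expect_nonneg fun c _ => hf _)
    fun b => expect_nonneg fun c _ => hg _).trans_eq ?_
  refine expect_congr rfl fun a _ => expect_congr rfl fun b _ => ?_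
  rw [hfirst _ a b, hsecond _ a b, htop, hfirst _ a b, hsecond _ a b]
  rfl

end Context

theorem expect_ownLoss_le {ε : ℝ} (hε : 0 < ε) (hε₁ : ε ≤ 1) {f : (Edge d N → ZMod 4) → ℝ}
    {g : (Edge d N → ZMod 4) × Charge d N → ℝ} (hf : f ∈ Set.Icc 0 1) (hg : g ∈ Set.Icc 0 1)
    (i : ZMod 5) (z : Edge d N → ZMod 4 × ZMod 4) :
    𝔼 v, 𝔼 τ, ownLoss ε f g i v z τ ≤ pinError ε N := by
  -- Translating the ports of the copy `i` preserves its paths, and randomizes the pinned port.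
  let t (j : ZMod N) : ZMod 5 → ZMod N := fun k => if k = i ∨ k = i + 1 then j else 0
  let loss (v : ZMod 5 → ZMod N) (τ : ZMod N → Bool) (j : ZMod N) : ℝ := pinLoss ε
    (pinnedMean (firstSection f i v z) τ j false) (pinnedMean (firstSection f i v z) τ j true)
    (pinnedMean (secondSection g i v z) τᶜ j false) (pinnedMean (secondSection g i v z) τᶜ j true)
  have hloss (v : ZMod 5 → ZMod N) (j : ZMod N) (τ : ZMod N → Bool) :
      ownLoss ε f g i (v + t j) z τ = loss v τ (v i + j) := by
    have hdiff : (v + t j) (i + 1) - (v + t j) i = v (i + 1) - v i := by simp [t]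
    have hfar : ∀ k ∈ ({i, i + 1}ᶜ : Finset (ZMod 5)), (v + t j) k = v k := by simp +contextual [t]
    have hi : (v + t j) i = v i + j := by simp [t]
    rw [ownLoss, firstSection_congr f hdiff, secondSection_congr g hdiff hfar, hi]
  rw [expect_eq_expect_expect_add (fun v => 𝔼 τ, ownLoss ε f g i v z τ) t]
  refine expect_le univ_nonempty fun v _ => ?_
  calc 𝔼 j, 𝔼 τ, ownLoss ε f g i (v + t j) z τ
    _ = 𝔼 τ, 𝔼 j, loss v τ (v i + j) := by
        simp only [hloss]
        exact expect_comm ..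
    _ = 𝔼 τ, 𝔼 j, loss v τ j := expect_congr rfl fun τ _ =>
        Fintype.expect_equiv (Equiv.addLeft (v i)) _ (loss v τ) fun j => rfl
    _ ≤ pinError ε (Fintype.card (ZMod N)) :=
        expect_pinLoss_pinnedMean_le hε hε₁ ⟨fun c => hf.1 _, fun c => hf.2 _⟩
          ⟨fun c => hg.1 _, fun c => hg.2 _⟩
    _ = pinError ε N := by rw [ZMod.card]

theorem expect_portLoss_le (h : N ≤ 2 ^ d) {ε : ℝ} (hε : 0 < ε) (hε₁ : ε ≤ 1)
    {f : (Edge d N → ZMod 4) → ℝ} {g : (Edge d N → ZMod 4) × Charge d N → ℝ}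
    (hf : f ∈ Set.Icc 0 1) (hg : g ∈ Set.Icc 0 1) (i : ZMod 5) :
    𝔼 κ : Context d N, κ.portLoss ε f g i ≤ pinError ε N := by
  have habsorb (v : ZMod 5 → ZMod N) (σ a b : ZMod 5 → ZMod N → Bool) :
      𝔼 z, ownLoss ε f g i v (Context.absorbed ⟨v, σ, z⟩ i a b) (σ i) =
        𝔼 z, ownLoss ε f g i v z (σ i) :=
    Fintype.expect_equiv (.ofBijective _ (Context.bijective_absorbed v σ a b i)) _
      (fun z => ownLoss ε f g i v z (σ i)) fun z => rfl
  have hside (φ : (ZMod N → Bool) → ℝ) : 𝔼 σ : ZMod 5 → ZMod N → Bool, φ (σ i) = 𝔼 τ, φ τ := by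
    rw [← expect_expect_update i]
    simp only [Function.update_self, Fintype.expect_const]
  calc 𝔼 κ : Context d N, κ.portLoss ε f g i
    _ ≤ 𝔼 κ : Context d N, 𝔼 a, 𝔼 b, ownLoss ε f g i κ.pos (κ.absorbed i a b) (κ.side i) :=
        expect_le_expect fun κ _ => κ.portLoss_le h ε hf.1 hg.1 i
    _ = 𝔼 v, 𝔼 σ : ZMod 5 → ZMod N → Bool, 𝔼 a : ZMod 5 → ZMod N → Bool,
          𝔼 b : ZMod 5 → ZMod N → Bool, 𝔼 z,
            ownLoss ε f g i v (Context.absorbed ⟨v, σ, z⟩ i a b) (σ i) := by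
        rw [Context.expect_eq]
        exact expect_congr rfl fun v _ => expect_congr rfl fun σ _ => (expect_comm ..).trans <|
          expect_congr rfl fun a _ => expect_comm ..
    _ = 𝔼 v, 𝔼 τ, 𝔼 z, ownLoss ε f g i v z τ := by
        simp only [habsorb, Fintype.expect_const]
        exact expect_congr rfl fun v _ => hside fun τ => 𝔼 z, ownLoss ε f g i v z τ
    _ = 𝔼 z, 𝔼 v, 𝔼 τ, ownLoss ε f g i v z τ :=
        (expect_congr rfl fun v _ => expect_comm ..).trans (expect_comm ..)
    _ ≤ pinError ε N := expect_le univ_nonempty fun z _ => expect_ownLoss_le hε hε₁ hf hg i z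

end SinglePort

/-! ### Nonnegative factorizations of the excess -/

theorem expect_ite_eq_apply {ι κ : Type*} [Fintype ι] [DecidableEq ι] [Fintype κ] [Nonempty κ]
    [DecidableEq κ] {i j : ι} (hij : i ≠ j) :
    𝔼 v : ι → κ, (if v i = v j then 1 else 0 : ℝ) = (Fintype.card κ : ℝ)⁻¹ := by
  rw [← expect_expect_update i]
  have h (v : ι → κ) : 𝔼 c, (if c = v j then 1 else 0 : ℝ) = (Fintype.card κ : ℝ)⁻¹ := by
    rw [Fintype.expect_eq_sum_div_card, sum_ite_eq' univ, if_pos (mem_univ _), one_div]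
  simp only [Function.update_self, Function.update_of_ne hij.symm, h, Fintype.expect_const]

theorem one_sub_mul_sum_mul_le (ε : ℝ) {a b : ZMod 5 → ℝ} {a₁ b₁ : ℝ} (ha : 0 ≤ a) (hb : 0 ≤ b)
    (ha₁ : 0 ≤ a₁) (hb₁ : 0 ≤ b₁) (hab : ∀ i, a i * b (i + 2) = 0) :
    (1 - ε) * ∑ i, a i * b i ≤ 2 * (a₁ * b₁) + ∑ i, pinLoss ε (a i) a₁ (b i) b₁ := by
  -- The indices with a nonzero product form an independent set in a five-cycle.
  have hindep : ∀ Z : ZMod 5 → Bool, (∀ i, (Z i && Z (i + 2)) = false) → #{i | Z i} ≤ 2 := by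
    decide
  have hcard : #{i | a i * b i ≠ 0} ≤ 2 := by
    refine le_trans (card_le_card fun i hi => ?_) (hindep (fun i => decide (a i * b i ≠ 0)) ?_)
    · simpa using hi
    · intro i
      rcases mul_eq_zero.1 (hab i) with h | h <;> simp [h]
  have hterm (i : ZMod 5) : (1 - ε) * (a i * b i) ≤
      (if a i * b i ≠ 0 then a₁ * b₁ else 0) + pinLoss ε (a i) a₁ (b i) b₁ := by
    split_ifs with h
    · exact one_sub_mul_le_mul_add_pinLoss ε (ha i) ha₁ (hb i) hb₁
    · have := neg_mul_le_pinLoss ε a₁ b₁ (ha i) (hb i)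
      rw [not_not.1 h] at this ⊢
      linarith
  calc (1 - ε) * ∑ i, a i * b i
    _ ≤ ∑ i, ((if a i * b i ≠ 0 then a₁ * b₁ else 0) + pinLoss ε (a i) a₁ (b i) b₁) := by
        rw [mul_sum]
        exact sum_le_sum fun i _ => hterm i
    _ = #{i | a i * b i ≠ 0} * (a₁ * b₁) + ∑ i, pinLoss ε (a i) a₁ (b i) b₁ := by
        rw [sum_add_distrib, ← sum_filter, sum_const, nsmul_eq_mul]
    _ ≤ 2 * (a₁ * b₁) + ∑ i, pinLoss ε (a i) a₁ (b i) b₁ := by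
        gcongr
        exact mod_cast hcard

section Factorization

variable {d N : ℕ} [NeZero d] [NeZero N]

theorem le_expect_defectExcess_allBut (i : ZMod 5) :
    2 - 6 / N ≤ 𝔼 κ : Context d N, defectExcess (d := d) κ.pos (allBut i) := by
  have hcollision {j k : ZMod 5} (hjk : j ≠ k) :
      𝔼 v : ZMod 5 → ZMod N, (if v j = v k then 1 else 0 : ℝ) = (N : ℝ)⁻¹ := by
    rw [expect_ite_eq_apply hjk, ZMod.card]
  have hne : i + 2 ≠ i + 3 ∧ i + 2 ≠ i + 4 ∧ i + 3 ≠ i + 4 := by revert i; decide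
  rw [Context.expect_eq]
  simp only [Fintype.expect_const]
  refine le_trans (le_of_eq ?_)
    (expect_le_expect fun v _ => le_defectExcess_allBut (d := d) (N := N) v i)
  rw [expect_sub_distrib, Fintype.expect_const, ← mul_expect, expect_add_distrib,
    expect_add_distrib, hcollision hne.1, hcollision hne.2.1, hcollision hne.2.2]
  ring

variable {R : Type*} [Fintype R] {f : R → (Edge d N → ZMod 4) → ℝ}
  {g : R → (Edge d N → ZMod 4) × Charge d N → ℝ}

theorem Context.defectExcess_eq_sum (h : N ≤ 2 ^ d) {c : ℝ}
    (hfg : ∀ x y, excess incident (ParityHolds y) x = c * ∑ r, f r x * g r y)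
    (κ : Context d N) (p q : ZMod 5 → Bool) : defectExcess (d := d) κ.pos (p ⊓ q) =
      c * ∑ r, κ.firstMean (f r) p * κ.secondMean (g r) q := by
  calc defectExcess (d := d) κ.pos (p ⊓ q)
    _ = 𝔼 a, 𝔼 b, c * ∑ r, f r (κ.labels p a) * g r (κ.swap.labels q b, κ.charge) := by
        simp only [← hfg, κ.excess_labels h, Fintype.expect_const]
    _ = c * ∑ r, κ.firstMean (f r) p * κ.secondMean (g r) q := by
        simp only [← mul_expect, expect_sum_comm, firstMean, secondMean, expect_mul_expect]

theorem Context.one_sub_mul_sum_defectExcess_le (h : N ≤ 2 ^ d) {c : ℝ} (hc : 0 < c)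
    (hf : 0 ≤ f) (hg : 0 ≤ g)
    (hfg : ∀ x y, excess incident (ParityHolds y) x = c * ∑ r, f r x * g r y)
    (κ : Context d N) (ε : ℝ) :
    (1 - ε) * ∑ i, defectExcess (d := d) κ.pos (allBut i) ≤
      2 * defectExcess (d := d) κ.pos ⊤ + c * ∑ r, ∑ i, κ.portLoss ε (f r) (g r) i := by
  have hfirst (r : R) (q : ZMod 5 → Bool) : 0 ≤ κ.firstMean (f r) q :=
    expect_nonneg fun a _ => hf r _
  have hsecond (r : R) (q : ZMod 5 → Bool) : 0 ≤ κ.secondMean (g r) q :=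
    expect_nonneg fun b _ => hg r _
  have hzero (r : R) (i : ZMod 5) :
      κ.firstMean (f r) (allBut i) * κ.secondMean (g r) (allBut (i + 2)) = 0 := by
    have hsum := κ.defectExcess_eq_sum h hfg (allBut i) (allBut (i + 2))
    rw [defectExcess_allBut_inf, zero_eq_mul, or_iff_right hc.ne',
      sum_eq_zero_iff_of_nonneg fun r _ => mul_nonneg (hfirst r _) (hsecond r _)] at hsum
    exact hsum r (mem_univ r)
  have hdiag (p : ZMod 5 → Bool) := κ.defectExcess_eq_sum h hfg p p
  simp only [inf_idem] at hdiag
  calc (1 - ε) * ∑ i, defectExcess (d := d) κ.pos (allBut i)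
    _ = c * ∑ r, (1 - ε) *
          ∑ i, κ.firstMean (f r) (allBut i) * κ.secondMean (g r) (allBut i) := by
        simp only [hdiag]
        rw [← mul_sum, ← mul_sum, sum_comm, mul_left_comm]
    _ ≤ c * ∑ r, (2 * (κ.firstMean (f r) ⊤ * κ.secondMean (g r) ⊤) +
          ∑ i, κ.portLoss ε (f r) (g r) i) :=
        mul_le_mul_of_nonneg_left (sum_le_sum fun r _ => one_sub_mul_sum_mul_le ε
          (fun i => hfirst r _) (fun i => hsecond r _) (hfirst r ⊤) (hsecond r ⊤) (hzero r)) hc.le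
    _ = _ := by
        rw [hdiag, sum_add_distrib, ← mul_sum]
        ring

theorem one_sub_mul_le_of_factorization (h : N ≤ 2 ^ d) {c : ℝ} (hc : 0 < c)
    (hf : ∀ r, f r ∈ Set.Icc 0 1) (hg : ∀ r, g r ∈ Set.Icc 0 1)
    (hfg : ∀ x y, excess incident (ParityHolds y) x = c * ∑ r, f r x * g r y)
    {ε : ℝ} (hε : 0 < ε) (hε₁ : ε ≤ 1) :
    (1 - ε) * (5 * (2 - 6 / N)) ≤ 2 * 4 + c * (Fintype.card R * (5 * pinError ε N)) :=
  calc (1 - ε) * (5 * (2 - 6 / N))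
    _ ≤ (1 - ε) * ∑ i, 𝔼 κ : Context d N, defectExcess (d := d) κ.pos (allBut i) := by
        refine mul_le_mul_of_nonneg_left ?_ (sub_nonneg.2 hε₁)
        simpa using card_nsmul_le_sum univ _ _ fun i _ =>
          le_expect_defectExcess_allBut (d := d) (N := N) i
    _ = 𝔼 κ : Context d N, (1 - ε) * ∑ i, defectExcess (d := d) κ.pos (allBut i) := by
        rw [← mul_expect, expect_sum_comm]
    _ ≤ 𝔼 κ : Context d N, (2 * 4 + c * ∑ r, ∑ i, κ.portLoss ε (f r) (g r) i) := by
        refine expect_le_expect fun κ _ => (κ.one_sub_mul_sum_defectExcess_le h hc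
          (fun r => (hf r).1) (fun r => (hg r).1) hfg ε).trans ?_
        gcongr
        exact defectExcess_top_le κ.pos
    _ = 2 * 4 + c * ∑ r, ∑ i, 𝔼 κ : Context d N, κ.portLoss ε (f r) (g r) i := by
        simp only [expect_add_distrib, Fintype.expect_const, ← mul_expect, expect_sum_comm]
    _ ≤ 2 * 4 + c * ∑ _r : R, ∑ _i : ZMod 5, pinError ε N := by
        gcongr
        exact expect_portLoss_le h hε hε₁ (hf _) (hg _) _
    _ = _ := by
        simp only [sum_const, card_univ, nsmul_eq_mul, ZMod.card, Nat.cast_ofNat]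

end Factorization

/-! ### The formulas -/

section ParityFormula

/-- The encoding of an edge label by two bits. -/
def labelBits : ZMod 4 ≃ (Bool → Bool) := Fintype.equivOfCardEq rfl

theorem half_le_of_isEF {d N k : ℕ} [NeZero d] [NeZero N] (h : N ≤ 2 ^ d) (hN : 54 ≤ N)
    (hEF : IsEF (SATpoly (labelFormula (incident (d := d) (N := N)) labelBits)) k) :
    1 / 2 ≤ (d * N : ℝ) * ((k + 1) * (5 * pinError (1 / 10) N)) := by
  obtain ⟨f, hf, g, hg, hfg⟩ :=
    hEF.exists_excess_factorization ParityHolds excess_parityHolds_nonneg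
  have hcard : (Fintype.card (Node d N) : ℝ) = d * N := by simp
  rw [hcard] at hfg
  have hdN : (0 : ℝ) < d * N := by
    exact_mod_cast Nat.mul_pos (NeZero.pos d) (NeZero.pos N)
  have hle := one_sub_mul_le_of_factorization h hdN (fun r => ⟨hf.1 r, hf.2 r⟩)
    (fun r => ⟨hg.1 r, hg.2 r⟩) (fun x y => hfg x y) (ε := 1 / 10) (by norm_num) (by norm_num)
  have hsix : (6 : ℝ) / N ≤ 6 / 54 := by gcongr; exact_mod_cast hN
  rw [Fintype.card_option, Fintype.card_fin, Nat.cast_add, Nat.cast_one] at hle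
  linarith

theorem eventually_mul_sq_le_exp : ∀ᶠ N : ℕ in Filter.atTop,
    12800 * (N : ℝ) ^ 2 ≤ Real.exp (N / 25600) := by
  have hlim : Filter.Tendsto (fun N : ℕ => (N : ℝ) / 25600) Filter.atTop Filter.atTop :=
    tendsto_natCast_atTop_atTop.atTop_div_const (by norm_num)
  filter_upwards [((Real.tendsto_exp_div_pow_atTop 2).comp hlim).eventually_ge_atTop
    (12800 * 25600 ^ 2), Filter.eventually_gt_atTop 0] with N hN hN₀
  rw [Function.comp_apply, le_div_iff₀ (by positivity)] at hN
  linear_combination hN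

theorem eventually_exp_le_of_isEF : ∀ᶠ N : ℕ in Filter.atTop, ∀ (d k : ℕ) [NeZero d] [NeZero N],
    N ≤ 2 ^ d → d ≤ N →
      IsEF (SATpoly (labelFormula (incident (d := d) (N := N)) labelBits)) k →
        Real.exp (N / 25600) ≤ k := by
  filter_upwards [eventually_mul_sq_le_exp, Filter.eventually_ge_atTop 54]
    with N hexp hN d k _ _ h hd hEF
  set E := Real.exp (N / 25600) with hE
  have hone : 1 ≤ E := Real.one_le_exp (by positivity)
  have herror : pinError (1 / 10) N = 640 / E ^ 2 := by
    rw [pinError, hE, ← Real.exp_nat_mul, Real.exp_neg, ← div_eq_mul_inv]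
    ring_nf
  have hd : (d * N : ℝ) ≤ N ^ 2 := by
    rw [sq]
    gcongr
  have hhalf : 1 / 2 ≤ (k + 1) / (4 * E) :=
    calc (1 : ℝ) / 2
      _ ≤ (d * N : ℝ) * ((k + 1) * (5 * pinError (1 / 10) N)) := half_le_of_isEF h hN hEF
      _ ≤ E / 12800 * ((k + 1) * (5 * (640 / E ^ 2))) := by
          rw [herror]
          gcongr
          linarith
      _ = (k + 1) / (4 * E) := by
          field_simp
          norm_num
  rw [le_div_iff₀ (by positivity)] at hhalf
  linarith

/-- The formula `labelFormula` for the butterfly networks, on variables indexed by numbers. -/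
def parityFormula (d N : ℕ) [NeZero d] [NeZero N] :
    TwoSAT (Fin (Fintype.card (LabelVar (Node d N) (Edge d N) Slot (ZMod 4) Bool))) :=
  (labelFormula incident labelBits).map (Fintype.equivFin _)

theorem card_labelVar_le (d N : ℕ) [NeZero d] [NeZero N] :
    (Fintype.card (LabelVar (Node d N) (Edge d N) Slot (ZMod 4) Bool) : ℝ) ≤
      4 ^ 20 * 40 * (d * N) := by
  have h : Fintype.card (LabelVar (Node d N) (Edge d N) Slot (ZMod 4) Bool) =
      5 * (2 * (d * N)) * 2 + d * N * 4 ^ 20 := by simp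
  rw [h]
  push_cast
  linarith [show (0 : ℝ) ≤ d * N by positivity]

theorem length_clauses_parityFormula (d N : ℕ) [NeZero d] [NeZero N] :
    ((parityFormula d N).clauses.length : ℝ) = 4 ^ 20 * 40 * (d * N) := by
  have h : (parityFormula d N).clauses.length = d * N * (4 ^ 20 * (20 * 2)) := by
    rw [parityFormula, TwoSAT.map, List.length_map, length_clauses_labelFormula]
    simp
  rw [h]
  push_cast
  ring

end ParityFormula

section Parameters

theorem natLog_add_one_le {n N : ℕ} {B : ℝ} (hn : 2 ≤ n) (hN : N ≠ 0) (hB : 1 ≤ B)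
    (h : (N : ℝ) ≤ n * B) : (Nat.log 2 N + 1 : ℕ) ≤ (4 + 4 * Real.log B) * Real.log n := by
  have hlog_two : 1 / 2 ≤ Real.log 2 := by linarith [Real.log_two_gt_d9]
  have hlog_n : Real.log 2 ≤ Real.log n := Real.log_le_log two_pos (mod_cast hn)
  have hlog_N : Nat.log 2 N * Real.log 2 ≤ Real.log n + Real.log B := by
    rw [← Real.log_pow, ← Real.log_mul (by positivity) (by positivity)]
    refine Real.log_le_log (by positivity) (le_trans ?_ h)
    exact_mod_cast Nat.pow_log_le_self 2 hN
  have hlog_B : Real.log B ≤ 2 * Real.log B * Real.log n := by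
    nlinarith [Real.log_nonneg hB]
  have hk : (Nat.log 2 N : ℝ) ≤ 2 * (Nat.log 2 N * Real.log 2) := by
    nlinarith [show (0 : ℝ) ≤ Nat.log 2 N by positivity]
  push_cast
  linarith

theorem exists_size_parameters (N₀ : ℕ) : ∃ K : ℝ, 1 ≤ K ∧ ∀ n : ℕ, 2 ≤ n → ∃ (d N : ℕ),
    N₀ ≤ N ∧ d ≠ 0 ∧ N ≠ 0 ∧ N ≤ 2 ^ d ∧ d ≤ N ∧ n / Real.log n ≤ N ∧ (d * N : ℝ) ≤ K * n := by
  set B : ℝ := 2 + N₀ with hB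
  have hB₂ : 2 ≤ B := by simp [hB]
  have hlog_B : 0 ≤ Real.log (2 * B) := Real.log_nonneg (by linarith)
  refine ⟨(4 + 4 * Real.log (2 * B)) * B, by nlinarith, fun n hn => ?_⟩
  have hlog_n : 1 / 2 ≤ Real.log n := by
    linarith [Real.log_two_gt_d9, Real.log_le_log two_pos (show (2 : ℝ) ≤ n from mod_cast hn)]
  set x : ℝ := n / Real.log n with hx
  have hx₁ : 1 ≤ x := by
    rw [hx, one_le_div (by linarith)]
    linarith [Real.log_le_sub_one_of_pos (show (0 : ℝ) < n by positivity)]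
  have hx₂ : x ≤ 2 * n := by
    rw [hx, div_le_iff₀ (by linarith)]
    nlinarith [show (0 : ℝ) ≤ n by positivity]
  set N := ⌈x⌉₊ + N₀ with hN
  have hN₀ : N ≠ 0 := by have := Nat.ceil_pos.2 (zero_lt_one.trans_le hx₁); omega
  have hxN : x ≤ N := (Nat.le_ceil x).trans (by simp [hN])
  have hNx : N ≤ B * x := by
    have := Nat.ceil_lt_add_one (zero_le_one.trans hx₁)
    rw [hN, hB]
    push_cast
    nlinarith [show (0 : ℝ) ≤ N₀ by positivity]
  refine ⟨Nat.log 2 N + 1, N, by omega, by omega, hN₀, (Nat.lt_pow_succ_log_self one_lt_two N).le,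
    Nat.log_lt_self 2 hN₀, hxN, ?_⟩
  calc ((Nat.log 2 N + 1 : ℕ) : ℝ) * N
    _ ≤ (4 + 4 * Real.log (2 * B)) * Real.log n * (B * x) := by
        gcongr
        exact natLog_add_one_le hn hN₀ (by linarith) (by nlinarith)
    _ = (4 + 4 * Real.log (2 * B)) * B * n := by
        rw [hx]
        field_simp

end Parameters

theorem two_rpow_le_exp {t : ℝ} (ht : 0 ≤ t) : (2 : ℝ) ^ t ≤ Real.exp t := by
  rw [Real.rpow_def_of_pos two_pos, Real.exp_le_exp]
  nlinarith [Real.log_two_lt_d9]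

/-- There are 2-SAT formulas with `O(n)` variables and clauses (each clause having exactly
two literals) whose satisfying-assignment polytope has extension complexity
at least `2^(c·n/log n)`. -/
theorem twoSAT_large_xc :
    ∃ c C : ℝ, 0 < c ∧ 1 ≤ C ∧ ∀ n : ℕ, 2 ≤ n →
      ∃ (N : ℕ) (Φ : TwoSAT (Fin N)),
        (N : ℝ) ≤ C * n ∧
        (Φ.clauses.length : ℝ) ≤ C * n ∧
        (∀ cl ∈ Φ.clauses, cl.1 ≠ cl.2) ∧
        (2 : ℝ) ^ (c * n / Real.log n) ≤ (xc (SATpoly Φ) : ℝ) := by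
  obtain ⟨N₀, hN₀⟩ := Filter.eventually_atTop.1 eventually_exp_le_of_isEF
  obtain ⟨K, hK, hparameters⟩ := exists_size_parameters N₀
  refine ⟨1 / 25600, 4 ^ 20 * 40 * K, by norm_num, by linarith, fun n hn => ?_⟩
  obtain ⟨d, N, hN, hd, hN', hpow, hdN, hle, hsize⟩ := hparameters n hn
  have : NeZero d := ⟨hd⟩
  have : NeZero N := ⟨hN'⟩
  have hsize' : (4 ^ 20 * 40 * (d * N) : ℝ) ≤ 4 ^ 20 * 40 * K * n := by
    rw [mul_assoc _ K]
    gcongr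
  refine ⟨_, parityFormula d N, (card_labelVar_le d N).trans hsize',
    (length_clauses_parityFormula d N).trans_le hsize', fst_ne_snd_of_mem_clauses_map _ _ _, ?_⟩
  calc (2 : ℝ) ^ (1 / 25600 * n / Real.log n)
    _ ≤ Real.exp (1 / 25600 * n / Real.log n) := two_rpow_le_exp (by positivity)
    _ ≤ Real.exp (N / 25600) :=
        Real.exp_le_exp.2 (by linear_combination hle / 25600)
    _ ≤ xc (SATpoly (parityFormula d N)) :=
        hN₀ N hN d _ hpow hdN (isEF_SATpoly_xc_map (Fintype.equivFin _) _)
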